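/- arXiv:2604.01875 — 3 statements merged into one kernel-verified Lean document; each statement's English description precedes it below -/
import Mathlib

section
/- Let (M,d) be a pointed metric space with base point 0 and let c ≥ 1. Then the following are equivalent: (i) for every bounded subset A ⊆ M with 0 ∈ A (regarded as a pointed metric space with the induced metric), every sequence (μ_n) of finitely supported functions μ_n : A → ℝ with sup_n ‖μ_n‖ < ∞ satisfies ca(μ_n) ≤ c·de(μ_n) (all quantities computed over A); (ii) every sequence (μ_n) of finitely supported functions μ_n : M → ℝ with sup_n ‖μ_n‖ < ∞ satisfies ca(μ_n) ≤ c·de(μ_n) (computed over M). (This expresses the statement: F(M) is c-Schur if and only if F(A) is c-Schur for each bounded subset A ⊆ M.) -/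
open scoped BigOperators

/-- The free norm of a finitely supported function `μ : M → ℝ` over a pointed metric
space `(M, z)`. -/
noncomputable def freeNorm {M : Type*} [MetricSpace M] (z : M) (μ : M →₀ ℝ) : ℝ :=
  sSup {s | ∃ f : M → ℝ, f z = 0 ∧ LipschitzWith 1 f ∧ s = ∑ x ∈ μ.support, μ x * f x}

/-- `ca(μ_n) = inf_n sup {‖μ_k - μ_l‖ : k, l ≥ n}` computed with the free norm. -/
noncomputable def seqCa {M : Type*} [MetricSpace M] (z : M) (μ : ℕ → M →₀ ℝ) : ℝ :=
  sInf {t | ∃ n : ℕ, t = sSup {s | ∃ k, n ≤ k ∧ ∃ l, n ≤ l ∧ s = freeNorm z (μ k - μ l)}}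

/-- `de(μ_n) = sup_f inf_n sup {|⟨μ_k - μ_l, f⟩| : k, l ≥ n}` over `1`-Lipschitz `f`
vanishing at the base point. -/
noncomputable def seqDe {M : Type*} [MetricSpace M] (z : M) (μ : ℕ → M →₀ ℝ) : ℝ :=
  sSup {t | ∃ f : M → ℝ, f z = 0 ∧ LipschitzWith 1 f ∧
    t = sInf {u | ∃ n : ℕ, u = sSup {s | ∃ k, n ≤ k ∧ ∃ l, n ≤ l ∧
      s = |∑ x ∈ (μ k - μ l).support, (μ k - μ l) x * f x|}}}

noncomputable def pr {M : Type*} (μ : M →₀ ℝ) (f : M → ℝ) : ℝ := μ.sum fun x a => a * f x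

def Lp {M : Type*} [MetricSpace M] (z : M) (L : ℝ) (f : M → ℝ) : Prop :=
  f z = 0 ∧ ∀ x y, |f x - f y| ≤ L * dist x y

theorem lp_iff {M : Type*} [MetricSpace M] (z : M) (f : M → ℝ) :
    Lp z 1 f ↔ f z = 0 ∧ LipschitzWith 1 f := by
  unfold Lp
  rw [lipschitzWith_iff_dist_le_mul]
  simp [Real.dist_eq]

theorem Lp.abs_le {M : Type*} [MetricSpace M] {z : M} {L : ℝ} {f : M → ℝ} (h : Lp z L f) (x : M) :
    |f x| ≤ L * dist x z := by
  have := h.2 x z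
  rwa [h.1, sub_zero] at this

theorem pr_sub {M : Type*} (μ ν : M →₀ ℝ) (f : M → ℝ) : pr (μ - ν) f = pr μ f - pr ν f := by
  unfold pr
  exact Finsupp.sum_sub_index (fun a b c => by ring)

theorem pr_neg {M : Type*} (μ : M →₀ ℝ) (f : M → ℝ) : pr (-μ) f = - pr μ f := by
  have := pr_sub 0 μ f
  simpa [pr] using this

theorem pr_add_right {M : Type*} (μ : M →₀ ℝ) (f g : M → ℝ) :
    pr μ (fun x => f x + g x) = pr μ f + pr μ g := by
  unfold pr
  rw [← Finsupp.sum_add]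
  exact Finsupp.sum_congr (fun x _ => by ring)

theorem pr_smul_right {M : Type*} (μ : M →₀ ℝ) (a : ℝ) (f : M → ℝ) :
    pr μ (fun x => a * f x) = a * pr μ f := by
  unfold pr Finsupp.sum
  rw [Finset.mul_sum]
  exact Finset.sum_congr rfl (fun x _ => by ring)

theorem pr_congr {M : Type*} (μ : M →₀ ℝ) {f g : M → ℝ} (h : ∀ x, μ x ≠ 0 → f x = g x) :
    pr μ f = pr μ g := by
  unfold pr
  exact Finsupp.sum_congr (fun x hx => by rw [h x (by simpa using hx)])

theorem freeNorm_eq {M : Type*} [MetricSpace M] (z : M) (μ : M →₀ ℝ) :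
    freeNorm z μ = sSup {s | ∃ f : M → ℝ, Lp z 1 f ∧ s = pr μ f} := by
  unfold freeNorm
  congr 1
  ext s
  simp only [Set.mem_ofPred_eq, lp_iff, and_assoc]
  rfl

theorem lp_zero {M : Type*} [MetricSpace M] (z : M) : Lp z 1 (fun _ => 0) :=
  ⟨rfl, fun x y => by simp⟩

theorem fn_bdd {M : Type*} [MetricSpace M] (z : M) (μ : M →₀ ℝ) :
    BddAbove {s | ∃ f : M → ℝ, Lp z 1 f ∧ s = pr μ f} := by
  refine ⟨∑ x ∈ μ.support, |μ x| * dist x z, ?_⟩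
  rintro s ⟨f, hf, rfl⟩
  unfold pr Finsupp.sum
  refine Finset.sum_le_sum fun x _ => ?_
  have h := hf.abs_le x
  rw [one_mul] at h
  calc μ x * f x ≤ |μ x * f x| := le_abs_self _
    _ = |μ x| * |f x| := abs_mul _ _
    _ ≤ _ := by gcongr

theorem pr_le {M : Type*} [MetricSpace M] {z : M} (μ : M →₀ ℝ) {f : M → ℝ} (hf : Lp z 1 f) :
    pr μ f ≤ freeNorm z μ := by
  rw [freeNorm_eq]
  exact le_csSup (fn_bdd z μ) ⟨f, hf, rfl⟩

theorem fn_le {M : Type*} [MetricSpace M] {z : M} (μ : M →₀ ℝ) {C : ℝ}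
    (h : ∀ f, Lp z 1 f → pr μ f ≤ C) : freeNorm z μ ≤ C := by
  rw [freeNorm_eq]
  refine csSup_le ⟨_, _, lp_zero z, rfl⟩ ?_
  rintro s ⟨f, hf, rfl⟩
  exact h f hf

theorem fn_exists {M : Type*} [MetricSpace M] (z : M) (μ : M →₀ ℝ) {C : ℝ}
    (h : C < freeNorm z μ) : ∃ f, Lp z 1 f ∧ C < pr μ f := by
  by_contra! H
  exact absurd (fn_le μ H) (not_le.2 h)

theorem fn_nonneg {M : Type*} [MetricSpace M] (z : M) (μ : M →₀ ℝ) : 0 ≤ freeNorm z μ := by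
  have := pr_le μ (lp_zero z)
  simpa [pr] using this

theorem Lp.scale {M : Type*} [MetricSpace M] {z : M} {L : ℝ} {f : M → ℝ} (h : Lp z L f) (a : ℝ) :
    Lp z (|a| * L) (fun x => a * f x) := by
  refine ⟨by simp [h.1], fun x y => ?_⟩
  rw [← mul_sub, abs_mul, mul_assoc]
  exact mul_le_mul_of_nonneg_left (h.2 x y) (abs_nonneg a)

theorem Lp.inv {M : Type*} [MetricSpace M] {z : M} {L : ℝ} (hL : 0 < L) {f : M → ℝ}
    (h : Lp z L f) : Lp z 1 (fun x => L⁻¹ * f x) := by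
  have := h.scale L⁻¹
  rwa [abs_of_pos (inv_pos.2 hL), inv_mul_cancel₀ hL.ne'] at this

theorem abs_pr_le {M : Type*} [MetricSpace M] {z : M} (μ : M →₀ ℝ) {L : ℝ} (hL : 0 < L)
    {f : M → ℝ} (h : Lp z L f) : |pr μ f| ≤ L * freeNorm z μ := by
  have h1 := h.inv hL
  have h2 := pr_le μ h1
  have h3 := pr_le μ (by simpa using h1.scale (-1))
  simp only [← mul_neg] at h3
  rw [pr_smul_right] at h2
  rw [pr_smul_right, show (fun x => - f x) = fun x => (-1) * f x by ext; simp, pr_smul_right] at h3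
  rw [inv_mul_le_iff₀ hL] at h2 h3
  rw [abs_le]
  constructor <;> linarith

theorem fn_sub_le {M : Type*} [MetricSpace M] (z : M) (μ ν : M →₀ ℝ) :
    freeNorm z (μ - ν) ≤ freeNorm z μ + freeNorm z ν := by
  refine fn_le _ fun f hf => ?_
  rw [pr_sub]
  have h1 := pr_le μ hf
  have h2 := abs_pr_le ν one_pos hf
  have := abs_le.1 h2
  linarith

theorem fn_neg {M : Type*} [MetricSpace M] (z : M) (μ : M →₀ ℝ) :
    freeNorm z (-μ) ≤ freeNorm z μ := by
  refine fn_le _ fun f hf => ?_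
  rw [pr_neg]
  have := abs_le.1 (abs_pr_le μ one_pos hf)
  linarith

/-- iterated oscillation -/
noncomputable def osc (s : ℕ → ℕ → ℝ) : ℝ :=
  sInf {t | ∃ n : ℕ, t = sSup {r | ∃ k, n ≤ k ∧ ∃ l, n ≤ l ∧ r = s k l}}

theorem le_osc {s : ℕ → ℕ → ℝ} {B a : ℝ} (hB : ∀ k l, s k l ≤ B)
    (h : ∀ n, ∃ k, n ≤ k ∧ ∃ l, n ≤ l ∧ a ≤ s k l) : a ≤ osc s := by
  refine le_csInf ⟨_, 0, rfl⟩ ?_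
  rintro t ⟨n, rfl⟩
  obtain ⟨k, hk, l, hl, h⟩ := h n
  refine h.trans (le_csSup ⟨B, ?_⟩ ⟨k, hk, l, hl, rfl⟩)
  rintro r ⟨k, hk, l, hl, rfl⟩
  exact hB k l

theorem osc_le {s : ℕ → ℕ → ℝ} {B a : ℝ} (hB : ∀ k l, s k l ≤ B) (h0 : ∀ k l, 0 ≤ s k l)
    (n : ℕ) (h : ∀ k l, n ≤ k → n ≤ l → s k l ≤ a) : osc s ≤ a := by
  have : sSup {r | ∃ k, n ≤ k ∧ ∃ l, n ≤ l ∧ r = s k l} ≤ a := by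
    refine csSup_le ⟨_, n, le_rfl, n, le_rfl, rfl⟩ ?_
    rintro r ⟨k, hk, l, hl, rfl⟩
    exact h k l hk hl
  unfold osc
  refine le_trans (csInf_le ?_ ?_) this
  swap
  · exact ⟨n, rfl⟩
  refine ⟨0, ?_⟩
  rintro t ⟨n, rfl⟩
  refine (h0 n n).trans (le_csSup ⟨B, ?_⟩ ⟨n, le_rfl, n, le_rfl, rfl⟩)
  rintro r ⟨k, hk, l, hl, rfl⟩
  exact hB k l

theorem of_lt_osc {s : ℕ → ℕ → ℝ} {B a : ℝ} (hB : ∀ k l, s k l ≤ B) (h0 : ∀ k l, 0 ≤ s k l)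
    (h : a < osc s) (n : ℕ) : ∃ k, n ≤ k ∧ ∃ l, n ≤ l ∧ a < s k l := by
  by_contra! H
  exact absurd (osc_le hB h0 n (fun k l hk hl => H k hk l hl)) (not_le.2 h)

theorem seqCa_eq {M : Type*} [MetricSpace M] (z : M) (μ : ℕ → M →₀ ℝ) :
    seqCa z μ = osc fun k l => freeNorm z (μ k - μ l) := rfl

theorem seqDe_eq {M : Type*} [MetricSpace M] (z : M) (μ : ℕ → M →₀ ℝ) :
    seqDe z μ = sSup {t | ∃ f, Lp z 1 f ∧ t = osc fun k l => |pr (μ k - μ l) f|} := by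
  unfold seqDe
  congr 1
  ext s
  simp only [Set.mem_ofPred_eq, lp_iff, and_assoc]
  rfl

def PP {M : Type*} [MetricSpace M] (z : M) (c : ℝ) : Prop :=
  ∀ w : ℕ → M →₀ ℝ, (∃ C : ℝ, ∀ n, freeNorm z (w n) ≤ C) → ∀ ε > 0,
    ∃ f, Lp z 1 f ∧ ∀ n, ∃ j, n ≤ j ∧ freeNorm z (w j) ≤ c * |pr (w j) f| + ε

theorem PP_of_schur {M : Type*} [MetricSpace M] (z : M) (c : ℝ) (hc : 1 ≤ c)
    (H : ∀ μ : ℕ → M →₀ ℝ, (∃ C : ℝ, ∀ n, freeNorm z (μ n) ≤ C) →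
      seqCa z μ ≤ c * seqDe z μ) : PP z c := by
  rintro w ⟨C, hC⟩ ε hε
  have hc0 : 0 < c := by linarith
  obtain ⟨a, -, φ, hφ, ha⟩ := isCompact_Icc.tendsto_subseq
    (x := fun n => freeNorm z (w n)) (s := Set.Icc 0 C) (fun n => ⟨fn_nonneg _ _, hC n⟩)
  obtain ⟨e, he, hee⟩ : ∃ e > 0, (2 + c) * e ≤ ε :=
    ⟨ε / (2 + c), by positivity, by field_simp; rfl⟩
  obtain ⟨N, hN⟩ := (Metric.tendsto_atTop.1 ha) e he
  let ν : ℕ → M →₀ ℝ := fun n => if n % 2 = 0 then w (φ (n / 2 + N)) else - w (φ (n / 2 + N))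
  have hν : ∀ n, freeNorm z (ν n) ≤ C := by
    intro n
    simp only [ν]
    split_ifs
    · exact hC _
    · exact (fn_neg _ _).trans (hC _)
  have hνp : ∀ n f, |pr (ν n) f| = |pr (w (φ (n / 2 + N))) f| := by
    intro n f
    simp only [ν]
    split_ifs
    · rfl
    · rw [pr_neg, abs_neg]
  have hN' : ∀ j, |freeNorm z (w (φ (j + N))) - a| < e := fun j => by
    have := hN (j + N) (by omega)
    rwa [Real.dist_eq] at this
  have h1 := H ν ⟨C, hν⟩
  have h2 : 2 * a - 2 * e ≤ seqCa z ν := by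
    rw [seqCa_eq]
    refine le_osc (B := C + C) (fun k l => (fn_sub_le _ _ _).trans (add_le_add (hν k) (hν l))) ?_
    intro n
    refine ⟨2 * n, by omega, 2 * n + 1, by omega, ?_⟩
    have e1 : ν (2 * n) = w (φ (n + N)) := by simp [ν]
    have e2 : ν (2 * n + 1) = - w (φ (n + N)) := by
      simp only [ν]
      rw [if_neg (by omega), show (2 * n + 1) / 2 = n by omega]
    rw [e1, e2]
    have : 2 * freeNorm z (w (φ (n + N))) ≤ freeNorm z (w (φ (n + N)) - - w (φ (n + N))) := by
      have : freeNorm z (w (φ (n + N))) ≤ freeNorm z (w (φ (n + N)) - - w (φ (n + N))) / 2 := by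
        refine fn_le _ fun f hf => ?_
        have := pr_le (w (φ (n + N)) - - w (φ (n + N))) hf
        rw [pr_sub, pr_neg] at this
        linarith
      linarith
    have := abs_lt.1 (hN' n)
    linarith
  have h3 : (2 * a - 2 * e) / c - 2 * e < seqDe z ν := by
    have : (2 * a - 2 * e) / c ≤ seqDe z ν := by
      rw [div_le_iff₀ hc0]; linarith
    linarith
  rw [seqDe_eq] at h3
  obtain ⟨t, ⟨f, hf, rfl⟩, h4⟩ := exists_lt_of_lt_csSup (by exact ⟨_, _, lp_zero z, rfl⟩) h3
  refine ⟨f, hf, fun n => ?_⟩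
  have hb : ∀ k l, |pr (ν k - ν l) f| ≤ C + C := fun k l => by
    have := abs_pr_le (ν k - ν l) one_pos hf
    have h5 := (fn_sub_le z (ν k) (ν l)).trans (add_le_add (hν k) (hν l))
    linarith
  obtain ⟨k, hk, l, hl, h5⟩ := of_lt_osc hb (fun _ _ => abs_nonneg _) h4 (2 * n)
  have key : ∀ m, 2 * n ≤ m → (a - e) / c - e < |pr (ν m) f| →
      ∃ j, n ≤ j ∧ freeNorm z (w j) ≤ c * |pr (w j) f| + ε := by
    intro m hm h
    rw [hνp] at h
    have h8 := hφ.id_le (m / 2 + N)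
    refine ⟨φ (m / 2 + N), ?_, ?_⟩
    · simp only [id] at h8; omega
    · have h6 := abs_lt.1 (hN' (m / 2))
      have h7 : (a - e) < c * (|pr (w (φ (m / 2 + N))) f| + e) := by
        rw [← div_lt_iff₀' hc0]; linarith
      nlinarith
  rw [pr_sub] at h5
  have h6 := abs_sub (pr (ν k) f) (pr (ν l) f)
  have h7 : (2 * a - 2 * e) / c - 2 * e = 2 * ((a - e) / c - e) := by ring
  by_cases h8 : (a - e) / c - e < |pr (ν k) f|
  · exact key k hk h8
  · exact key l hl (by linarith)

theorem schur_of_PP {M : Type*} [MetricSpace M] (z : M) (c : ℝ) (hc : 1 ≤ c) (H : PP z c) :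
    ∀ μ : ℕ → M →₀ ℝ, (∃ C : ℝ, ∀ n, freeNorm z (μ n) ≤ C) →
      seqCa z μ ≤ c * seqDe z μ := by
  rintro μ ⟨C, hC⟩
  have hc0 : 0 < c := by linarith
  by_contra! h
  obtain ⟨a', h1, h⟩ := exists_between h
  obtain ⟨a, h2, h3⟩ := exists_between h
  have hb : ∀ k l, freeNorm z (μ k - μ l) ≤ C + C := fun k l =>
    (fn_sub_le _ _ _).trans (add_le_add (hC k) (hC l))
  rw [seqCa_eq] at h3
  choose k hk l hl hkl using of_lt_osc hb (fun _ _ => fn_nonneg _ _) h3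
  obtain ⟨f, hf, hj⟩ := H (fun n => μ (k n) - μ (l n)) ⟨C + C, fun n => hb _ _⟩ (a - a') (by linarith)
  have hb' : ∀ f, Lp z 1 f → ∀ k l, |pr (μ k - μ l) f| ≤ C + C := fun f hf k l => by
    have := abs_pr_le (μ k - μ l) one_pos hf
    have h5 := hb k l
    linarith
  have h4 : a' / c ≤ osc fun k l => |pr (μ k - μ l) f| := by
    refine le_osc (hb' f hf) fun n => ?_
    obtain ⟨j, hj1, hj2⟩ := hj n
    refine ⟨k j, hj1.trans (hk j), l j, hj1.trans (hl j), ?_⟩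
    have := hkl j
    rw [div_le_iff₀' hc0]
    linarith
  have h5 : a' / c ≤ seqDe z μ := by
    rw [seqDe_eq]
    refine h4.trans (le_csSup ⟨C + C, ?_⟩ ⟨f, hf, rfl⟩)
    rintro t ⟨g, hg, rfl⟩
    exact osc_le (hb' g hg) (fun _ _ => abs_nonneg _) 0 (fun k l _ _ => hb' g hg k l)
  rw [div_le_iff₀' hc0] at h5
  linarith

theorem ext_lip {M : Type*} [MetricSpace M] (s : Set M) {L : ℝ} (hL : 0 ≤ L) (f : M → ℝ)
    (h : ∀ x ∈ s, ∀ y ∈ s, |f x - f y| ≤ L * dist x y) :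
    ∃ g : M → ℝ, (∀ x y, |g x - g y| ≤ L * dist x y) ∧ ∀ x ∈ s, g x = f x := by
  lift L to NNReal using hL
  have : LipschitzOnWith L f s := by
    rw [lipschitzOnWith_iff_dist_le_mul]
    intro x hx y hy
    rw [Real.dist_eq]
    exact h x hx y hy
  obtain ⟨g, hg, hgs⟩ := this.extend_real
  refine ⟨g, fun x y => ?_, fun x hx => (hgs hx).symm⟩
  have := (lipschitzWith_iff_dist_le_mul.1 hg) x y
  rwa [Real.dist_eq] at this

theorem ext_sub {M : Type*} [MetricSpace M] {z : M} {A : Set M} (hz : z ∈ A) {f : A → ℝ}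
    (hf : Lp (⟨z, hz⟩ : A) 1 f) : ∃ g : M → ℝ, Lp z 1 g ∧ ∀ x : A, g x = f x := by
  classical
  obtain ⟨g, h1, h2⟩ := ext_lip A zero_le_one (fun x => if h : x ∈ A then f ⟨x, h⟩ else 0) (by
    intro x hx y hy
    simp only [hx, hy, dif_pos]
    exact hf.2 ⟨x, hx⟩ ⟨y, hy⟩)
  refine ⟨g, ⟨?_, h1⟩, fun x => ?_⟩
  · rw [h2 z hz, dif_pos hz]; exact hf.1
  · rw [h2 x x.2, dif_pos x.2]

theorem Lp.restrict {M : Type*} [MetricSpace M] {z : M} {A : Set M} (hz : z ∈ A) {f : M → ℝ} {L : ℝ}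
    (hf : Lp z L f) : Lp (⟨z, hz⟩ : A) L (fun x : A => f x) :=
  ⟨hf.1, fun x y => hf.2 x y⟩

theorem PP_sub {M : Type*} [MetricSpace M] (z : M) (c : ℝ) (H : PP z c) (A : Set M) (hz : z ∈ A) :
    PP (⟨z, hz⟩ : A) c := by
  rintro w ⟨C, hC⟩ ε hε
  have hp : ∀ n (f : M → ℝ), pr ((w n).mapDomain Subtype.val) f = pr (w n) (fun x : A => f x) := by
    intro n f
    unfold pr
    exact Finsupp.sum_mapDomain_index (by simp) (fun a b c => by ring)
  have hn : ∀ n, freeNorm z ((w n).mapDomain Subtype.val) = freeNorm (⟨z, hz⟩ : A) (w n) := by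
    intro n
    apply le_antisymm
    · refine fn_le _ fun f hf => ?_
      rw [hp]
      exact pr_le _ (hf.restrict hz)
    · refine fn_le _ fun f hf => ?_
      obtain ⟨g, hg, hgf⟩ := ext_sub hz hf
      have := pr_le ((w n).mapDomain Subtype.val) hg
      rw [hp] at this
      simpa only [hgf] using this
  obtain ⟨f, hf, h⟩ := H (fun n => (w n).mapDomain Subtype.val) ⟨C, fun n => (hn n).trans_le (hC n)⟩ ε hε
  refine ⟨_, hf.restrict hz, fun n => ?_⟩
  obtain ⟨j, hj, h⟩ := h n
  rw [hn, hp] at h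
  exact ⟨j, hj, h⟩

noncomputable def mulF {M : Type*} (θ : M → ℝ) (μ : M →₀ ℝ) : M →₀ ℝ :=
  Finsupp.onFinset μ.support (fun x => θ x * μ x) (fun x h => by
    simp only [ne_eq, mul_eq_zero, not_or] at h
    simpa using h.2)

theorem mulF_apply {M : Type*} (θ : M → ℝ) (μ : M →₀ ℝ) (x : M) : mulF θ μ x = θ x * μ x := rfl

theorem pr_mulF {M : Type*} (θ : M → ℝ) (μ : M →₀ ℝ) (f : M → ℝ) :
    pr (mulF θ μ) f = pr μ (fun x => θ x * f x) := by
  unfold pr mulF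
  rw [Finsupp.onFinset_sum _ (fun a => by simp)]
  exact Finset.sum_congr rfl (fun x _ => by ring)

noncomputable def th {M : Type*} [MetricSpace M] (z : M) (R : ℝ) (x : M) : ℝ :=
  max 0 (min 1 (2 - dist x z / R))

theorem th_one {M : Type*} [MetricSpace M] {z : M} {R : ℝ} (hR : 0 < R) {x : M}
    (h : dist x z ≤ R) : th z R x = 1 := by
  have : dist x z / R ≤ 1 := (div_le_one hR).2 h
  unfold th
  rw [min_eq_left (by linarith), max_eq_right zero_le_one]

theorem th_zero {M : Type*} [MetricSpace M] {z : M} {R : ℝ} (hR : 0 < R) {x : M}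
    (h : 2 * R ≤ dist x z) : th z R x = 0 := by
  have : 2 ≤ dist x z / R := (le_div_iff₀ hR).2 h
  unfold th
  rw [max_eq_left]
  exact (min_le_right _ _).trans (by linarith)

theorem th_abs {M : Type*} [MetricSpace M] (z : M) (R : ℝ) (x : M) : |th z R x| ≤ 1 := by
  unfold th
  rw [abs_of_nonneg (le_max_left _ _)]
  exact max_le zero_le_one (min_le_left _ _)

theorem th_lip {M : Type*} [MetricSpace M] (z : M) {R : ℝ} (hR : 0 < R) (x y : M) :
    |th z R x - th z R y| ≤ dist x y / R := by
  unfold th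
  have h1 := abs_max_sub_max_le_abs (min 1 (2 - dist x z / R)) (min 1 (2 - dist y z / R)) 0
  have h2 := abs_min_sub_min_le_max 1 (2 - dist x z / R) 1 (2 - dist y z / R)
  rw [max_comm, max_comm 0]
  refine h1.trans (h2.trans ?_)
  rw [sub_self, abs_zero]
  refine max_le (by positivity) ?_
  rw [show 2 - dist x z / R - (2 - dist y z / R) = (dist y z - dist x z) / R by ring, abs_div,
    abs_of_pos hR]
  gcongr
  rw [dist_comm x y]
  exact abs_dist_sub_le y x z

theorem th_mul {M : Type*} [MetricSpace M] {z : M} {R : ℝ} (hR : 0 < R) {f : M → ℝ}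
    (hf : Lp z 1 f) : Lp z 3 (fun x => th z R x * f x) := by
  refine ⟨by simp [hf.1], ?_⟩
  have key : ∀ x y, dist x z ≤ dist y z →
      |th z R x * f x - th z R y * f y| ≤ 3 * dist x y := by
    intro x y hxy
    by_cases hx : 2 * R ≤ dist x z
    · rw [th_zero hR hx, th_zero hR (hx.trans hxy)]
      simp
    · push Not at hx
      have e : th z R x * f x - th z R y * f y
        = th z R y * (f x - f y) + (th z R x - th z R y) * f x := by ring
      have h1 : |th z R y * (f x - f y)| ≤ dist x y := by
        rw [abs_mul]
        have := hf.2 x y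
        have h2 := th_abs z R y
        nlinarith [abs_nonneg (f x - f y)]
      have h2 : |(th z R x - th z R y) * f x| ≤ 2 * dist x y := by
        rw [abs_mul]
        have a1 := th_lip z hR x y
        have a2 := hf.abs_le x
        calc _ ≤ dist x y / R * (2 * R) := by
              apply mul_le_mul a1 (by linarith) (abs_nonneg _) (by positivity)
          _ = _ := by field_simp
      rw [e]
      exact (abs_add_le _ _).trans (by linarith)
  intro x y
  rcases le_total (dist x z) (dist y z) with h | h
  · exact key x y h
  · rw [abs_sub_comm, dist_comm]; exact key y x h

theorem mid_mul {M : Type*} [MetricSpace M] {z : M} {R S : ℝ} (hR : 0 < R) (hS : 0 < S)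
    {f : M → ℝ} (hf : Lp z 1 f) : Lp z 6 (fun x => (th z S x - th z R x) * f x) := by
  refine ⟨by simp [hf.1], fun x y => ?_⟩
  have h1 := (th_mul hR hf).2 x y
  have h2 := (th_mul hS hf).2 x y
  have e : (th z S x - th z R x) * f x - (th z S y - th z R y) * f y
    = (th z S x * f x - th z S y * f y) - (th z R x * f x - th z R y * f y) := by ring
  simp only at h1 h2 ⊢
  rw [e]
  exact (abs_sub _ _).trans (by linarith)

/-- far apart points -/
theorem far_lip {M : Type*} [MetricSpace M] {z : M} {L K : ℝ} (hL : 0 ≤ L) (hK : 1 < K) {x y : M}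
    {a b : ℝ} (ha : |a| ≤ L * dist x z) (hb : |b| ≤ L * dist y z) (h : K * dist x z ≤ dist y z) :
    |a - b| ≤ L * ((K + 1) / (K - 1)) * dist x y := by
  have h1 : |a - b| ≤ L * (dist x z + dist y z) := (abs_sub _ _).trans (by linarith)
  have h2 : dist y z - dist x z ≤ dist x y := by
    have := dist_triangle y x z
    rw [dist_comm y x] at this
    linarith
  refine h1.trans ?_
  rw [mul_assoc]
  refine mul_le_mul_of_nonneg_left ?_ hL
  have h3 : 0 < K - 1 := by linarith
  rw [div_mul_eq_mul_div, le_div_iff₀ h3]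
  nlinarith

theorem exists_R {M : Type*} [MetricSpace M] (z : M) (w : ℕ → M →₀ ℝ) (C : ℝ)
    (hC : ∀ n, freeNorm z (w n) ≤ C) (ε : ℝ) (hε : 0 < ε) :
    ∃ R, 0 < R ∧ ∀ S, R ≤ S → ∀ n, ∃ j, n < j ∧
      freeNorm z (mulF (fun x => th z S x - th z R x) (w j)) < ε := by
  by_contra! H
  have key : ∀ N : ℕ, ∃ T, 0 < T ∧ ∃ n, ∀ j, n < j → ∃ F : M → ℝ, Lp z 18 F ∧
      (∀ x, |F x| ≤ 6 * dist x z) ∧ (∀ x, T ≤ dist x z → F x = 0) ∧ N * (ε / 2) ≤ pr (w j) F := by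
    intro N
    induction N with
    | zero =>
      refine ⟨1, one_pos, 0, fun j _ => ⟨fun _ => 0, ⟨rfl, fun x y => ?_⟩, fun x => ?_,
        fun _ _ => rfl, ?_⟩⟩
      · simp
      · simp
      · simp [pr]
    | succ N ih =>
      obtain ⟨T, hT, n, hn⟩ := ih
      obtain ⟨S, hS, m, hm⟩ := H (2 * T) (by positivity)
      have hS0 : 0 < S := by linarith
      refine ⟨max T (2 * S), lt_max_of_lt_left hT, max n m, fun j hj => ?_⟩
      obtain ⟨F, hF, hF6, hF0, hFp⟩ := hn j (lt_of_le_of_lt (le_max_left _ _) hj)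
      have h1 := hm j (lt_of_le_of_lt (le_max_right _ _) hj)
      obtain ⟨g, hg, hgp⟩ := fn_exists z _ (lt_of_lt_of_le (half_lt_self hε) h1)
      rw [pr_mulF] at hgp
      have hG := mid_mul (z := z) (R := 2 * T) (S := S) (by positivity) hS0 hg
      set G : M → ℝ := fun x => (th z S x - th z (2 * T) x) * g x with hGdef
      have hG0 : ∀ x, dist x z ≤ 2 * T → G x = 0 := by
        intro x hx
        simp only [hGdef]
        rw [th_one hS0 (hx.trans hS), th_one (by positivity) hx, sub_self, zero_mul]
      have hG1 : ∀ x, 2 * S ≤ dist x z → G x = 0 := by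
        intro x hx
        simp only [hGdef]
        rw [th_zero hS0 hx, th_zero (by positivity) (by linarith), sub_self, zero_mul]
      refine ⟨fun x => F x + G x, ⟨by simp [hF.1, hG.1], ?_⟩, ?_, ?_, ?_⟩
      · have k1 : ∀ x y, dist x z ≤ dist y z →
            |(F x + G x) - (F y + G y)| ≤ 18 * dist x y := by
          intro x y hxy
          by_cases hy : dist y z ≤ 2 * T
          · rw [hG0 y hy, hG0 x (hxy.trans hy), add_zero, add_zero]
            exact hF.2 x y
          · by_cases hx : T ≤ dist x z
            · rw [hF0 x hx, hF0 y (hx.trans hxy), zero_add, zero_add]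
              have := hG.2 x y
              have h3 := dist_nonneg (x := x) (y := y)
              linarith
            · push Not at hx hy
              rw [hG0 x (by linarith), hF0 y (by linarith), add_zero, zero_add]
              have := far_lip (z := z) (L := 6) (K := 2) (by norm_num) (by norm_num)
                (hF6 x) (hG.abs_le y) (by linarith)
              norm_num at this
              exact this
        intro x y
        rcases le_total (dist x z) (dist y z) with h | h
        · exact k1 x y h
        · rw [abs_sub_comm, dist_comm]; exact k1 y x h
      · intro x
        simp only
        by_cases hx : T ≤ dist x z
        · rw [hF0 x hx, zero_add]
          exact hG.abs_le x
        · rw [hG0 x (by linarith), add_zero]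
          exact hF6 x
      · intro x hx
        simp only
        rw [hF0 x ((le_max_left _ _).trans hx), hG1 x ((le_max_right _ _).trans hx), add_zero]
      · rw [pr_add_right]
        push_cast
        linarith
  obtain ⟨N, hN⟩ := exists_nat_gt (18 * C / (ε / 2))
  obtain ⟨T, -, n, hn⟩ := key N
  obtain ⟨F, hF, -, -, hFp⟩ := hn (n + 1) (by omega)
  have h1 := abs_pr_le (w (n + 1)) (by norm_num) hF
  have h2 := le_abs_self (pr (w (n + 1)) F)
  have h3 := hC (n + 1)
  rw [div_lt_iff₀ (by positivity)] at hN
  linarith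

theorem glue {M : Type*} [MetricSpace M] (z : M) (G : ℕ → M → ℝ) (lo hi : ℕ → ℝ) (K : ℝ)
    (hK : 1 < K) (hG : ∀ n, Lp z 1 (G n)) (h0 : lo 0 ≤ 0) (h0' : 0 ≤ hi 0)
    (hlh : ∀ n m, n < m → K * hi n ≤ lo m) :
    ∃ F, Lp z ((K + 1) / (K - 1)) F ∧
      ∀ n x, lo n ≤ dist x z → dist x z ≤ hi n → F x = G n x := by
  classical
  have hK1 : 0 < K - 1 := by linarith
  have hL1 : 1 ≤ (K + 1) / (K - 1) := by rw [le_div_iff₀ hK1]; linarith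
  let Q : M → ℕ → Prop := fun x n => lo n ≤ dist x z ∧ dist x z ≤ hi n
  have far : ∀ n m x y, n < m → Q x n → Q y m → K * dist x z ≤ dist y z := by
    intro n m x y hnm hx hy
    have := hlh n m hnm
    have h1 := hx.2
    have h2 := hy.1
    nlinarith
  have uniq : ∀ n m x, n < m → Q x n → Q x m → x = z := by
    intro n m x hnm hx hy
    have := far n m x x hnm hx hy
    have h2 := dist_nonneg (x := x) (y := z)
    apply dist_le_zero.1
    nlinarith
  let F0 : M → ℝ := fun x => if h : ∃ n, Q x n then G h.choose x else 0
  have hF0 : ∀ n x, Q x n → F0 x = G n x := by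
    intro n x hx
    have h : ∃ n, Q x n := ⟨n, hx⟩
    simp only [F0, dif_pos h]
    have hsp := h.choose_spec
    generalize h.choose = p at hsp ⊢
    rcases lt_trichotomy p n with h1 | h1 | h1
    · rw [uniq _ _ x h1 hsp hx, (hG _).1, (hG _).1]
    · rw [h1]
    · rw [uniq _ _ x h1 hx hsp, (hG _).1, (hG _).1]
  have farL : ∀ n m x y, n < m → Q x n → Q y m →
      |F0 x - F0 y| ≤ (K + 1) / (K - 1) * dist x y := by
    intro n m x y hnm hx hy
    rw [hF0 n x hx, hF0 m y hy]
    have := far_lip (z := z) (L := 1) zero_le_one hK ((hG n).abs_le x) ((hG m).abs_le y)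
      (far n m x y hnm hx hy)
    rwa [one_mul] at this
  obtain ⟨F, hF1, hF2⟩ := ext_lip {x | ∃ n, Q x n} (zero_le_one.trans hL1) F0 (by
    rintro x ⟨n, hx⟩ y ⟨m, hy⟩
    rcases lt_trichotomy n m with h1 | h1 | h1
    · exact farL n m x y h1 hx hy
    · subst h1
      rw [hF0 n x hx, hF0 n y hy]
      have := (hG n).2 x y
      have h3 := dist_nonneg (x := x) (y := y)
      nlinarith
    · rw [abs_sub_comm, dist_comm]
      exact farL m n y x h1 hy hx)
  have hF : ∀ n x, Q x n → F x = G n x := fun n x hx => by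
    rw [hF2 x ⟨n, hx⟩, hF0 n x hx]
  refine ⟨F, ⟨?_, hF1⟩, fun n x h1 h2 => hF n x ⟨h1, h2⟩⟩
  rw [hF 0 z ⟨by simpa using h0, by simpa using h0'⟩, (hG 0).1]

theorem PP_of_bounded {M : Type*} [MetricSpace M] (z : M) (c : ℝ) (hc : 1 ≤ c)
    (H : ∀ A : Set M, ∀ hzA : z ∈ A, Bornology.IsBounded A → PP (⟨z, hzA⟩ : A) c) : PP z c := by
  rintro w ⟨C, hC⟩ ε hε
  have hC0 : 0 ≤ C := (fn_nonneg z (w 0)).trans (hC 0)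
  obtain ⟨e, he, he1, hee⟩ : ∃ e > 0, e ≤ 1 ∧ (3 * c + 2 + c * C) * e ≤ ε := by
    have hp : 0 < 3 * c + 2 + c * C := by positivity
    refine ⟨min 1 (ε / (3 * c + 2 + c * C)), by positivity, min_le_left _ _, ?_⟩
    calc _ ≤ (3 * c + 2 + c * C) * (ε / (3 * c + 2 + c * C)) := by
          gcongr; exact min_le_right _ _
      _ = ε := by field_simp
  obtain ⟨R, hR, hRS⟩ := exists_R z w C hC e he
  -- radii of supports
  have hρ : ∀ j, ∃ r, 0 ≤ r ∧ ∀ x, w j x ≠ 0 → dist x z ≤ r := by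
    intro j
    refine ⟨∑ x ∈ (w j).support, dist x z, Finset.sum_nonneg fun _ _ => dist_nonneg, fun x hx => ?_⟩
    exact Finset.single_le_sum (f := fun x => dist x z) (fun _ _ => dist_nonneg) (by simpa using hx)
  choose ρ hρ0 hρ using hρ
  let K : ℝ := 1 + 2 / e
  have hK : 1 < K := by
    have : 0 < 2 / e := by positivity
    simp only [K]; linarith
  have hL : (K + 1) / (K - 1) = 1 + e := by
    simp only [K]
    field_simp
    ring
  let S : ℕ → ℝ := fun m => K * (2 * R + ∑ k ∈ Finset.range (m + 1), ρ k)
  have hSR : ∀ m, K * (2 * R) ≤ S m := fun m => by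
    have : 0 ≤ ∑ k ∈ Finset.range (m + 1), ρ k := Finset.sum_nonneg fun _ _ => hρ0 _
    exact mul_le_mul_of_nonneg_left (by linarith) (by linarith)
  have hSρ : ∀ m k, k ≤ m → K * ρ k ≤ S m := fun m k hk => by
    have : ρ k ≤ ∑ k ∈ Finset.range (m + 1), ρ k :=
      Finset.single_le_sum (f := ρ) (fun _ _ => hρ0 _) (by simp; omega)
    exact mul_le_mul_of_nonneg_left (by linarith) (by linarith)
  have hS2 : ∀ m, 2 * R ≤ S m := fun m => by
    have := hSR m
    nlinarith
  have hS0 : ∀ m, 0 < S m := fun m => by linarith [hS2 m]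
  choose nx hnx hnxe using fun m => hRS (S m) (by linarith [hS2 m]) m
  let m : ℕ → ℕ := fun i => Nat.rec 0 (fun _ p => nx p) i
  have hm : ∀ i, m (i + 1) = nx (m i) := fun i => rfl
  have hmono : StrictMono m := strictMono_nat_of_lt_succ fun i => by rw [hm]; exact hnx _
  let v : ℕ → M →₀ ℝ := fun i => w (m (i + 1))
  let mid : ℕ → M →₀ ℝ := fun i => mulF (fun x => th z (S (m i)) x - th z R x) (v i)
  have hmid : ∀ i, freeNorm z (mid i) < e := fun i => hnxe (m i)
  let tl : ℕ → M →₀ ℝ := fun i => mulF (fun x => 1 - th z (S (m i)) x) (v i)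
  let A : Set M := Metric.closedBall z (2 * R)
  have hzA : z ∈ A := Metric.mem_closedBall_self (by positivity)
  let u : ℕ → A →₀ ℝ := fun i => (mulF (th z R) (v i)).subtypeDomain (· ∈ A)
  have hu : ∀ i (f : M → ℝ), pr (u i) (fun x : A => f x) = pr (v i) (fun x => th z R x * f x) := by
    intro i f
    rw [← pr_mulF]
    unfold pr
    refine Finsupp.sum_subtypeDomain_index (h := fun x a => a * f x) ?_
    intro x hx
    by_contra hxA
    have : 2 * R ≤ dist x z := by
      simp only [A, Metric.mem_closedBall, not_le] at hxA
      exact hxA.le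
    rw [Finsupp.mem_support_iff, mulF_apply, th_zero hR this, zero_mul] at hx
    exact hx rfl
  have split : ∀ i (f : M → ℝ), pr (v i) f
      = pr (u i) (fun x : A => f x) + pr (mid i) f + pr (tl i) f := by
    intro i f
    rw [hu, pr_mulF, pr_mulF, ← pr_add_right, ← pr_add_right]
    congr 1
    ext x
    ring
  have huC : ∀ i, freeNorm (⟨z, hzA⟩ : A) (u i) ≤ 3 * C := by
    intro i
    refine fn_le _ fun f hf => ?_
    obtain ⟨g, hg, hgf⟩ := ext_sub hzA hf
    rw [show f = fun x : A => g x from funext fun x => (hgf x).symm, hu]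
    have h1 := abs_pr_le (v i) (by norm_num) (th_mul hR hg)
    have h2 := hC (m (i + 1))
    exact (le_abs_self _).trans (h1.trans (by linarith))
  obtain ⟨f, hf, hfj⟩ := H A hzA Metric.isBounded_closedBall u ⟨_, huC⟩ e he
  obtain ⟨f', hf', hff'⟩ := ext_sub hzA hf
  have hg : ∀ i, ∃ g, Lp z 1 g ∧
      |pr (u i) f| + freeNorm z (tl i) - e ≤ |pr (u i) f + pr (tl i) g| := by
    intro i
    obtain ⟨g, hg, hgp⟩ := fn_exists z (tl i) (sub_lt_self _ he)
    rcases le_total 0 (pr (u i) f) with h | h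
    · refine ⟨g, hg, ?_⟩
      rw [abs_of_nonneg h]
      exact le_trans (by linarith) (le_abs_self _)
    · refine ⟨_, by simpa using hg.scale (-1), ?_⟩
      rw [show (fun x => - g x) = fun x => (-1) * g x by ext; simp, pr_smul_right]
      rw [abs_of_nonpos h]
      exact le_trans (by linarith) (neg_le_abs _)
  choose g hg hgp using hg
  obtain ⟨F, hF, hFG⟩ := glue z (fun n => Nat.casesOn n f' g)
    (fun n => Nat.casesOn n 0 (fun i => S (m i)))
    (fun n => Nat.casesOn n (2 * R) (fun i => ρ (m (i + 1)))) K hK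
    (by intro n; cases n with
      | zero => exact hf'
      | succ n => exact hg n)
    le_rfl (by change 0 ≤ 2 * R; positivity)
    (by
      intro a b hab
      cases b with
      | zero => omega
      | succ b =>
        cases a with
        | zero => exact hSR _
        | succ a => exact hSρ (m b) (m (a + 1)) (hmono.monotone (show a + 1 ≤ b by omega)))
  rw [hL] at hF
  have hFu : ∀ i, pr (u i) (fun x : A => F x) = pr (u i) f := by
    intro i
    congr 1
    ext x
    rw [← hff' x]
    exact hFG 0 x dist_nonneg x.2
  have hFt : ∀ i, pr (tl i) F = pr (tl i) (g i) := by
    intro i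
    refine pr_congr _ fun x hx => ?_
    rw [mulF_apply] at hx
    refine hFG (i + 1) x ?_ (hρ _ x (right_ne_zero_of_mul hx))
    by_contra hlt
    push Not at hlt
    apply left_ne_zero_of_mul hx
    rw [th_one (hS0 _) (le_of_lt hlt), sub_self]
  have he0 : 0 < 1 + e := by linarith
  refine ⟨_, hF.inv he0, fun n => ?_⟩
  obtain ⟨i, hi, hui⟩ := hfj n
  have hid := hmono.id_le (i + 1)
  refine ⟨m (i + 1), by simp only [id] at hid; omega, ?_⟩
  change freeNorm z (v i) ≤ c * |pr (v i) _| + ε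
  have hvC : freeNorm z (v i) ≤ C := hC _
  have hFi := hF.inv he0
  have t1 : freeNorm z (v i) ≤ freeNorm (⟨z, hzA⟩ : A) (u i) + freeNorm z (mid i)
      + freeNorm z (tl i) := by
    refine fn_le _ fun f hf => ?_
    rw [split]
    exact add_le_add (add_le_add (pr_le _ (hf.restrict hzA)) (pr_le _ hf)) (pr_le _ hf)
  have t2 := hmid i
  have t3 := abs_pr_le (mid i) he0 hF
  have t4 : |pr (u i) f + pr (tl i) (g i)| ≤ |pr (v i) F| + |pr (mid i) F| := by
    have := split i F
    rw [hFu, hFt] at this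
    rw [show pr (u i) f + pr (tl i) (g i) = pr (v i) F - pr (mid i) F by linarith]
    exact abs_sub _ _
  have t5 := hgp i
  have t6 := abs_pr_le (v i) one_pos hFi
  set P := |pr (v i) fun x => (1 + e)⁻¹ * F x| with hP
  have t7 : |pr (v i) F| = (1 + e) * P := by
    rw [hP, pr_smul_right, abs_mul, abs_of_pos (inv_pos.2 he0)]
    field_simp
  have tn := fn_nonneg z (tl i)
  have t8 : (1 + e) * freeNorm z (mid i) ≤ 2 * e := by
    have := fn_nonneg z (mid i)
    nlinarith
  have t9 : e * P ≤ e * C := by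
    apply mul_le_mul_of_nonneg_left _ he.le
    linarith
  have t10 : |pr (u i) f| + freeNorm z (tl i) ≤ P + (e * C + 3 * e) := by
    linarith
  have t11 : c * (|pr (u i) f| + freeNorm z (tl i)) ≤ c * (P + (e * C + 3 * e)) :=
    mul_le_mul_of_nonneg_left t10 (by linarith)
  have t12 : freeNorm z (tl i) ≤ c * freeNorm z (tl i) := by nlinarith
  nlinarith

/-- `F(M)` is `c`-Schur iff `F(A)` is `c`-Schur for every bounded subset `A ⊆ M`
containing the base point (here `A` carries the induced metric). -/
theorem cSchur_iff_cSchur_bounded_subsets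
    {M : Type*} [MetricSpace M] (z : M) (c : ℝ) (hc : 1 ≤ c) :
    (∀ A : Set M, ∀ hzA : z ∈ A, Bornology.IsBounded A →
      ∀ μ : ℕ → (A →₀ ℝ), (∃ C : ℝ, ∀ n, freeNorm (⟨z, hzA⟩ : A) (μ n) ≤ C) →
        seqCa (⟨z, hzA⟩ : A) μ ≤ c * seqDe (⟨z, hzA⟩ : A) μ) ↔
    (∀ μ : ℕ → M →₀ ℝ, (∃ C : ℝ, ∀ n, freeNorm z (μ n) ≤ C) →
      seqCa z μ ≤ c * seqDe z μ) := by
  constructor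
  · intro H
    refine schur_of_PP z c hc (PP_of_bounded z c hc fun A hzA hA => ?_)
    exact PP_of_schur _ c hc (H A hzA hA)
  · intro H A hzA _
    exact schur_of_PP _ c hc (PP_sub z c (PP_of_schur z c hc H) A hzA)
end

section
/- Let N ∈ ℕ and let (M,d) be a pointed metric space with base point 0 such that d takes only the values 0,1,…,N. Let (F_n)_{n=0}^∞ be pairwise disjoint finite subsets of M and let (γ_n)_{n=0}^∞ be functions γ_n : M → ℝ with support contained in F_n and with sup_n ‖γ_n‖ < ∞ (free norm). Assume that limsup_n ‖γ_0 + γ_n‖ > c for some c > 0. Then there exists a 3-Lipschitz function g : M → ℝ with g(0) = 0 such that limsup_n Σ_{x∈M} (γ_0 + γ_n)(x)·g(x) > c. -/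
open scoped BigOperators
open Filter

theorem sum_biUnion_le' {ι M : Type*} [DecidableEq M] (s : Finset ι) (X : ι → Finset M)
    (a : M → ℝ) (ha : ∀ x, 0 ≤ a x) :
    ∑ x ∈ s.biUnion X, a x ≤ ∑ i ∈ s, ∑ x ∈ X i, a x := by
  classical
  induction s using Finset.induction_on with
  | empty => simp
  | insert i s hi ih =>
    rw [Finset.biUnion_insert, Finset.sum_insert hi]
    have h := Finset.sum_union_inter (s₁ := X i) (s₂ := s.biUnion X) (f := a)
    have h2 : 0 ≤ ∑ x ∈ X i ∩ s.biUnion X, a x := Finset.sum_nonneg (fun x _ => ha x)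
    linarith

open Classical in
theorem mass_core {M : Type*} [MetricSpace M] (U : Ultrafilter ℕ) (F : ℕ → Finset M)
    (q : ℕ → M → ℝ) (V W : Finset ℝ) (hW : ∀ x y : M, dist x y ∈ W) (hV : ∀ n x, q n x ∈ V)
    (hq : ∀ n x y, |q n x - q n y| ≤ dist x y) (a : ℕ → M → ℝ) (ha : ∀ n x, 0 ≤ a n x) (K : ℝ)
    (hK : ∀ᶠ p in (U : Filter ℕ), ∑ x ∈ F p, a p x ≤ K) (η : ℝ) (hη : 0 < η) :
    ∀ᶠ m in (U : Filter ℕ), ∀ᶠ p in (U : Filter ℕ),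
      ∑ x ∈ (F p).filter (fun x => ∃ y ∈ F m, 3 * dist x y < |q m y - q p x|), a p x < η := by
  -- live points
  let live : M → ℝ → ℝ → Prop := fun y k d =>
    ∀ᶠ p in (U : Filter ℕ), ∃ x ∈ F p, q p x = k ∧ dist x y = d
  let X : ℝ × ℝ × ℝ → ℕ → ℕ → Finset M := fun t m p =>
    (F p).filter (fun x => q p x = t.2.1 ∧ ∃ y ∈ F m, q m y = t.1 ∧ live y t.2.1 t.2.2 ∧ dist x y = t.2.2)
  let T : Finset (ℝ × ℝ × ℝ) := (V ×ˢ V ×ˢ W).filter (fun t => 3 * t.2.2 < |t.1 - t.2.1|)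
  have hE : ∀ m, ∀ᶠ n in (U : Filter ℕ), ∀ y ∈ F m, ∀ t ∈ T, live y t.2.1 t.2.2 →
      ∃ x ∈ F n, q n x = t.2.1 ∧ dist x y = t.2.2 := by
    intro m
    rw [Filter.eventually_all_finset]
    intro y _
    rw [Filter.eventually_all_finset]
    intro t _
    by_cases h : live y t.2.1 t.2.2
    · filter_upwards [h] with n hn _ using hn
    · exact Filter.Eventually.of_forall (fun n h' => absurd h' h)
  have hN : ∀ m, ∀ᶠ n in (U : Filter ℕ), ∀ y ∈ F m, ∀ t ∈ T, ¬ live y t.2.1 t.2.2 →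
      ¬ ∃ x ∈ F n, q n x = t.2.1 ∧ dist x y = t.2.2 := by
    intro m
    rw [Filter.eventually_all_finset]
    intro y _
    rw [Filter.eventually_all_finset]
    intro t _
    by_cases h : live y t.2.1 t.2.2
    · exact Filter.Eventually.of_forall (fun n h' => absurd h h')
    · have h2 := Ultrafilter.eventually_not.2 h
      filter_upwards [h2] with n hn _ using hn
  have hclaim : ∀ t ∈ T, ∀ ε > 0, ∀ᶠ m in (U : Filter ℕ), ∀ᶠ p in (U : Filter ℕ),
      ∑ x ∈ X t m p, a p x < ε := by
    intro t ht ε hε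
    by_contra hcon
    have hcon1 := Ultrafilter.eventually_not.2 hcon
    have hcon2 : ∀ᶠ m in (U : Filter ℕ), ∀ᶠ p in (U : Filter ℕ), ε ≤ ∑ x ∈ X t m p, a p x := by
      filter_upwards [hcon1] with m hm
      filter_upwards [Ultrafilter.eventually_not.2 hm] with p hp using not_lt.1 hp
    have hind : ∀ R : ℕ, ∃ s : Finset ℕ, ∀ᶠ p in (U : Filter ℕ),
        R * ε ≤ ∑ x ∈ s.biUnion (fun m => X t m p), a p x := by
      intro R
      induction R with
      | zero => exact ⟨∅, by simp⟩
      | succ R ih =>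
        obtain ⟨s, hs⟩ := ih
        have h1 : ∀ᶠ n in (U : Filter ℕ), ∀ m ∈ s, ∀ y ∈ F m, ∀ t ∈ T, live y t.2.1 t.2.2 →
            ∃ x ∈ F n, q n x = t.2.1 ∧ dist x y = t.2.2 := by
          rw [Filter.eventually_all_finset]
          intro m _
          exact hE m
        obtain ⟨n, hn1, hn2⟩ := (h1.and hcon2).exists
        refine ⟨insert n s, ?_⟩
        filter_upwards [hs, hn2] with p hp1 hp2
        rw [Finset.biUnion_insert, Finset.sum_union]
        · push_cast; linarith
        · rw [Finset.disjoint_left]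
          intro x hx1 hx2
          obtain ⟨m, hm, hx2⟩ := Finset.mem_biUnion.1 hx2
          obtain ⟨_, hk, y', hy', hj', _, hd'⟩ := Finset.mem_filter.1 hx1
          obtain ⟨_, _, y, hy, hj, hl, hd⟩ := Finset.mem_filter.1 hx2
          obtain ⟨x', hx', hk', hd2⟩ := hn1 m hm y hy t ht hl
          have h3 := (Finset.mem_filter.1 ht).2
          have h4 := hq n y' x'
          rw [hj', hk'] at h4
          have h5 := dist_triangle4 y' x y x'
          rw [dist_comm y' x, hd', hd, dist_comm y x', hd2] at h5
          linarith
    obtain ⟨R, hR⟩ := exists_nat_gt (K / ε)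
    obtain ⟨s, hs⟩ := hind R
    obtain ⟨p, hp1, hp2⟩ := (hs.and hK).exists
    have h6 : ∑ x ∈ s.biUnion (fun m => X t m p), a p x ≤ ∑ x ∈ F p, a p x := by
      apply Finset.sum_le_sum_of_subset_of_nonneg
      · intro x hx
        obtain ⟨m, _, hx⟩ := Finset.mem_biUnion.1 hx
        exact (Finset.mem_filter.1 hx).1
      · intro x _ _; exact ha p x
    rw [div_lt_iff₀ hε] at hR
    linarith
  have hclaim2 : ∀ᶠ m in (U : Filter ℕ), ∀ t ∈ T, ∀ᶠ p in (U : Filter ℕ),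
      ∑ x ∈ X t m p, a p x < η / (T.card + 1) := by
    rw [Filter.eventually_all_finset]
    intro t ht
    exact hclaim t ht _ (by positivity)
  filter_upwards [hclaim2] with m hm
  have hm' : ∀ᶠ p in (U : Filter ℕ), ∀ t ∈ T, ∑ x ∈ X t m p, a p x < η / (T.card + 1) := by
    rw [Filter.eventually_all_finset]; exact hm
  filter_upwards [hm', hN m] with p hp1 hp2
  have hsub : (F p).filter (fun x => ∃ y ∈ F m, 3 * dist x y < |q m y - q p x|) ⊆
      T.biUnion (fun t => X t m p) := by
    intro x hx
    obtain ⟨hx, y, hy, hlt⟩ := Finset.mem_filter.1 hx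
    have htT : ((q m y, q p x, dist x y) : ℝ × ℝ × ℝ) ∈ T :=
      Finset.mem_filter.2 ⟨by simp [hV, hW], hlt⟩
    refine Finset.mem_biUnion.2 ⟨_, htT, Finset.mem_filter.2 ⟨hx, rfl, y, hy, rfl, ?_, rfl⟩⟩
    by_contra hl
    exact hp2 y hy _ htT hl ⟨x, hx, rfl, rfl⟩
  calc _ ≤ ∑ x ∈ T.biUnion (fun t => X t m p), a p x :=
        Finset.sum_le_sum_of_subset_of_nonneg hsub (fun x _ _ => ha p x)
    _ ≤ ∑ t ∈ T, ∑ x ∈ X t m p, a p x := by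
        exact sum_biUnion_le' _ _ _ (ha p)
    _ ≤ ∑ t ∈ T, η / (T.card + 1) := Finset.sum_le_sum (fun t ht => (hp1 t ht).le)
    _ = T.card * (η / (T.card + 1)) := by simp
    _ < η := by
        rw [mul_div_assoc', div_lt_iff₀ (by positivity)]; nlinarith

theorem fn_dist_le {M : Type*} [MetricSpace M] {N : ℕ}
    (hint : ∀ x y : M, ∃ k : ℕ, k ≤ N ∧ dist x y = k) (x y : M) : dist x y ≤ N := by
  obtain ⟨k, hk, h⟩ := hint x y
  rw [h]; exact_mod_cast hk

theorem fn_one_le {M : Type*} [MetricSpace M] {N : ℕ}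
    (hint : ∀ x y : M, ∃ k : ℕ, k ≤ N ∧ dist x y = k) {x y : M} (hxy : x ≠ y) :
    1 ≤ dist x y := by
  obtain ⟨k, hk, h⟩ := hint x y
  have := dist_pos.2 hxy
  rw [h] at this ⊢
  exact_mod_cast this

/-- pairing -/
noncomputable def prr {M : Type*} (μ : M →₀ ℝ) (f : M → ℝ) : ℝ := ∑ x ∈ μ.support, μ x * f x

theorem prr_subset {M : Type*} (μ : M →₀ ℝ) (f : M → ℝ) (s : Finset M) (h : μ.support ⊆ s) :
    prr μ f = ∑ x ∈ s, μ x * f x := by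
  apply Finset.sum_subset h
  intro x _ hx
  simp [Finsupp.notMem_support_iff.1 hx]

open Classical in
theorem prr_add {M : Type*} (μ ν : M →₀ ℝ) (f : M → ℝ) : prr (μ + ν) f = prr μ f + prr ν f := by
  rw [prr_subset (μ + ν) f (μ.support ∪ ν.support) Finsupp.support_add,
    prr_subset μ f (μ.support ∪ ν.support) Finset.subset_union_left,
    prr_subset ν f (μ.support ∪ ν.support) Finset.subset_union_right, ← Finset.sum_add_distrib]
  simp [add_mul]

theorem lip_of_abs {M : Type*} [MetricSpace M] {f : M → ℝ}
    (hf : ∀ x y, |f x - f y| ≤ dist x y) : LipschitzWith 1 f :=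
  LipschitzWith.of_dist_le_mul (fun x y => by simpa [Real.dist_eq] using hf x y)

theorem abs_of_lip {M : Type*} [MetricSpace M] {f : M → ℝ} (hf : LipschitzWith 1 f) (x y : M) :
    |f x - f y| ≤ dist x y := by
  simpa [Real.dist_eq] using hf.dist_le_mul x y

theorem prr_le {M : Type*} [MetricSpace M] {N : ℕ}
    (hint : ∀ x y : M, ∃ k : ℕ, k ≤ N ∧ dist x y = k) (z : M) (μ : M →₀ ℝ) (f : M → ℝ)
    (hz : f z = 0) (hf : ∀ x y, |f x - f y| ≤ dist x y) : prr μ f ≤ freeNorm z μ := by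
  apply le_csSup
  · refine ⟨∑ x ∈ μ.support, |μ x| * N, ?_⟩
    rintro s ⟨f, hz, hf, rfl⟩
    apply Finset.sum_le_sum
    intro x _
    have h1 := abs_of_lip hf x z
    rw [hz, sub_zero] at h1
    calc μ x * f x ≤ |μ x * f x| := le_abs_self _
      _ = |μ x| * |f x| := abs_mul _ _
      _ ≤ _ := mul_le_mul_of_nonneg_left (h1.trans (fn_dist_le hint _ _)) (abs_nonneg _)
  · exact ⟨f, hz, lip_of_abs hf, rfl⟩

theorem prr_le_mul {M : Type*} [MetricSpace M] {N : ℕ}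
    (hint : ∀ x y : M, ∃ k : ℕ, k ≤ N ∧ dist x y = k) (z : M) (μ : M →₀ ℝ) (f : M → ℝ)
    (L : ℝ) (hL : 0 < L)
    (hz : f z = 0) (hf : ∀ x y, |f x - f y| ≤ L * dist x y) : prr μ f ≤ L * freeNorm z μ := by
  have h := prr_le hint z μ (fun x => f x / L) (by simp [hz]) (by
    intro x y
    rw [← sub_div, abs_div, abs_of_pos hL, div_le_iff₀ hL]
    linarith [hf x y])
  have h2 : prr μ (fun x => f x / L) = prr μ f / L := by
    simp [prr, Finset.sum_div, mul_div_assoc]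
  rw [h2, div_le_iff₀ hL] at h
  linarith

theorem freeNorm_nonneg {M : Type*} [MetricSpace M] {N : ℕ}
    (hint : ∀ x y : M, ∃ k : ℕ, k ≤ N ∧ dist x y = k) (z : M) (μ : M →₀ ℝ) :
    0 ≤ freeNorm z μ := by
  have := prr_le hint z μ (fun _ => 0) rfl (by simp)
  simpa [prr] using this

theorem freeNorm_add {M : Type*} [MetricSpace M] {N : ℕ}
    (hint : ∀ x y : M, ∃ k : ℕ, k ≤ N ∧ dist x y = k) (z : M) (μ ν : M →₀ ℝ) :
    freeNorm z (μ + ν) ≤ freeNorm z μ + freeNorm z ν := by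
  apply csSup_le
  · exact ⟨_, fun _ => 0, rfl, lip_of_abs (by simp), rfl⟩
  · rintro s ⟨f, hz, hf, rfl⟩
    have h := prr_add μ ν f
    have h1 := prr_le hint z μ f hz (abs_of_lip hf)
    have h2 := prr_le hint z ν f hz (abs_of_lip hf)
    unfold prr at *
    linarith

open Classical in
theorem l1_bound {M : Type*} [MetricSpace M] {N : ℕ}
    (hint : ∀ x y : M, ∃ k : ℕ, k ≤ N ∧ dist x y = k) (z : M) (μ : M →₀ ℝ) (s : Finset M)
    (hs : μ.support ⊆ s) (hz : z ∉ s) : ∑ x ∈ s, |μ x| ≤ 2 * freeNorm z μ := by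
  let f : M → ℝ := fun x => if x ∈ s then (if 0 ≤ μ x then 1 / 2 else -1 / 2) else 0
  have hb : ∀ x, |f x| ≤ 1 / 2 := by
    intro x
    simp only [f]
    split_ifs <;> norm_num [abs_le]
  have h := prr_le hint z μ f (by simp [f, hz]) (by
    intro x y
    by_cases hxy : x = y
    · simp [hxy]
    · have h1 := fn_one_le hint hxy
      have h2 := abs_sub (f x) (f y)
      linarith [hb x, hb y])
  rw [prr_subset μ f s hs] at h
  have h3 : ∑ x ∈ s, μ x * f x = (∑ x ∈ s, |μ x|) / 2 := by
    rw [Finset.sum_div]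
    apply Finset.sum_congr rfl
    intro x hx
    simp only [f, hx, if_true]
    split_ifs with h0
    · rw [abs_of_nonneg h0]; ring
    · rw [abs_of_neg (not_le.1 h0)]; ring
  linarith

theorem round_exists {M : Type*} [MetricSpace M] {N : ℕ}
    (hint : ∀ x y : M, ∃ k : ℕ, k ≤ N ∧ dist x y = k) (z : M) (μ : M →₀ ℝ) (f : M → ℝ)
    (hz : f z = 0) (hf : ∀ x y, |f x - f y| ≤ dist x y) (δ : ℝ) (h0 : 0 < δ) (h1 : δ < 1) :
    ∃ q : M → ℝ, q z = 0 ∧ (∀ x y, |q x - q y| ≤ dist x y) ∧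
      (∀ x, q x ∈ (Finset.Icc (-⌈N / δ⌉) ⌈N / δ⌉).image (fun i : ℤ => δ * (i : ℝ))) ∧
      (1 - δ) * prr μ f - δ * freeNorm z μ ≤ prr μ q := by
  let Q : M → ℤ := fun x => ⌊(1 - δ) * f x / δ⌋
  have hQ : ∀ x, δ * (Q x : ℝ) ≤ (1 - δ) * f x ∧ (1 - δ) * f x < δ * Q x + δ := by
    intro x
    have ha := Int.floor_le ((1 - δ) * f x / δ)
    have hb := Int.lt_floor_add_one ((1 - δ) * f x / δ)
    rw [le_div_iff₀ h0] at ha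
    rw [div_lt_iff₀ h0] at hb
    constructor <;> simp only [Q] <;> linarith
  have hQz : Q z = 0 := by simp [Q, hz]
  have hL : ∀ x y, |δ * (Q x : ℝ) - δ * Q y| ≤ dist x y := by
    intro x y
    by_cases hxy : x = y
    · simp [hxy]
    · have h2 := fn_one_le hint hxy
      have h3 := abs_le.1 (hf x y)
      have hx := hQ x
      have hy := hQ y
      rw [abs_le]
      constructor <;> nlinarith
  refine ⟨fun x => δ * Q x, by simp [hQz], hL, ?_, ?_⟩
  · intro x
    refine Finset.mem_image.2 ⟨Q x, ?_, rfl⟩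
    have h2 := (hL x z).trans (fn_dist_le hint _ _)
    rw [hQz] at h2
    simp only [Int.cast_zero, mul_zero, sub_zero] at h2
    rw [abs_le] at h2
    have h3 := Int.le_ceil (N / δ)
    have h4 : (N : ℝ) ≤ ⌈N / δ⌉ * δ := by rwa [div_le_iff₀ h0] at h3
    rw [Finset.mem_Icc]
    constructor
    · have : (-(⌈N / δ⌉ : ℝ)) ≤ Q x := by nlinarith
      exact_mod_cast this
    · have : (Q x : ℝ) ≤ (⌈N / δ⌉ : ℝ) := by nlinarith
      exact_mod_cast this
  · have h2 := prr_le_mul hint z μ (fun x => (1 - δ) * f x - δ * Q x) δ h0 (by simp [hz, hQz]) (by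
      intro x y
      by_cases hxy : x = y
      · simp [hxy]
      · have h2 := fn_one_le hint hxy
        have hx := hQ x
        have hy := hQ y
        rw [abs_le]
        constructor <;> nlinarith)
    have h3 : prr μ (fun x => (1 - δ) * f x - δ * Q x) =
        (1 - δ) * prr μ f - prr μ (fun x => δ * Q x) := by
      simp only [prr, Finset.mul_sum, ← Finset.sum_sub_distrib]
      apply Finset.sum_congr rfl
      intro x _; ring
    linarith

theorem glue_s14 {M : Type*} [MetricSpace M] (A : ℕ → Set M) (q : ℕ → M → ℝ)
    (h : ∀ i l x y, x ∈ A i → y ∈ A l → |q i x - q l y| ≤ 3 * dist x y) :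
    ∃ g : M → ℝ, LipschitzWith 3 g ∧ ∀ i, ∀ x ∈ A i, g x = q i x := by
  classical
  let G : M → ℝ := fun x => if hx : ∃ i, x ∈ A i then q hx.choose x else 0
  have hG : ∀ i, ∀ x ∈ A i, G x = q i x := by
    intro i x hx
    have hex : ∃ i, x ∈ A i := ⟨i, hx⟩
    have := h _ i x x hex.choose_spec hx
    simp only [dist_self, mul_zero] at this
    simp only [G, dif_pos hex]
    exact sub_eq_zero.1 (abs_nonpos_iff.1 this)
  have hlip : LipschitzOnWith 3 G (⋃ i, A i) := by
    apply LipschitzOnWith.of_dist_le_mul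
    intro x hx y hy
    obtain ⟨i, hi⟩ := Set.mem_iUnion.1 hx
    obtain ⟨l, hl⟩ := Set.mem_iUnion.1 hy
    rw [hG i x hi, hG l y hl, Real.dist_eq]
    exact h i l x y hi hl
  obtain ⟨g, hg1, hg2⟩ := hlip.extend_real
  exact ⟨g, hg1, fun i x hx => by rw [← hg2 (Set.mem_iUnion.2 ⟨i, hx⟩), hG i x hx]⟩

/-- Key lemma: for a metric taking only the values `0, 1, …, N` and a bounded sequence
`(γ_n)` with pairwise disjoint finite supports such that `limsup ‖γ_0 + γ_n‖ > c > 0`,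
there is a `3`-Lipschitz function `g` vanishing at the base point with
`limsup ⟨γ_0 + γ_n, g⟩ > c`. -/
theorem exists_three_lipschitz_of_disjoint_supports
    {M : Type*} [MetricSpace M] (z : M) (N : ℕ)
    (hint : ∀ x y : M, ∃ k : ℕ, k ≤ N ∧ dist x y = k)
    (F : ℕ → Finset M) (hF : ∀ m n : ℕ, m ≠ n → Disjoint (F m) (F n))
    (γ : ℕ → M →₀ ℝ) (hsupp : ∀ n, (γ n).support ⊆ F n)
    (hbdd : ∃ C : ℝ, ∀ n, freeNorm z (γ n) ≤ C)
    (c : ℝ) (hc : 0 < c)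
    (hlim : c < limsup (fun n => freeNorm z (γ 0 + γ n)) atTop) :
    ∃ g : M → ℝ, g z = 0 ∧ LipschitzWith 3 g ∧
      c < limsup
        (fun n => ∑ x ∈ (γ 0 + γ n).support, (γ 0 + γ n) x * g x) atTop := by
  classical
  obtain ⟨C, hC⟩ := hbdd
  have hC0 : 0 ≤ C := (freeNorm_nonneg hint z (γ 0)).trans (hC 0)
  have hnorm : ∀ n, freeNorm z (γ 0 + γ n) ≤ 2 * C := fun n => by
    linarith [freeNorm_add hint z (γ 0) (γ n), hC 0, hC n]
  obtain ⟨c', hc', hlim'⟩ := exists_between hlim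
  have hfreq : ∃ᶠ n in atTop, c' < freeNorm z (γ 0 + γ n) := by
    refine frequently_lt_of_lt_limsup ?_ hlim'
    exact IsBoundedUnder.isCoboundedUnder_le ⟨0, by
      simpa using ⟨0, fun n _ => freeNorm_nonneg hint z (γ 0 + γ n)⟩⟩
  -- choose δ
  obtain ⟨δ, hδ0, hδ1, hδ⟩ : ∃ δ : ℝ, 0 < δ ∧ δ < 1 ∧ c < (1 - δ) * c' - δ * (2 * C) := by
    refine ⟨(c' - c) / (2 * (c' + 2 * C)), div_pos (by linarith) (by linarith), ?_, ?_⟩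
    · rw [div_lt_one (by linarith)]; linarith
    · have : (c' - c) / (2 * (c' + 2 * C)) * (c' + 2 * C) = (c' - c) / 2 := by
        have : c' + 2 * C ≠ 0 := by linarith
        field_simp
      nlinarith
  set c2 := (1 - δ) * c' - δ * (2 * C) with hc2
  let V : Finset ℝ := (Finset.Icc (-⌈N / δ⌉) ⌈N / δ⌉).image (fun i : ℤ => δ * (i : ℝ))
  have hqex : ∀ n, ∃ q : M → ℝ, q z = 0 ∧ (∀ x y, |q x - q y| ≤ dist x y) ∧ (∀ x, q x ∈ V) ∧
      (c' < freeNorm z (γ 0 + γ n) → c2 ≤ prr (γ 0 + γ n) q) := by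
    intro n
    by_cases hn : c' < freeNorm z (γ 0 + γ n)
    · have hne : {s | ∃ f : M → ℝ, f z = 0 ∧ LipschitzWith 1 f ∧
          s = ∑ x ∈ (γ 0 + γ n).support, (γ 0 + γ n) x * f x}.Nonempty :=
        ⟨_, fun _ => 0, rfl, lip_of_abs (by simp), rfl⟩
      obtain ⟨s, ⟨f, hfz, hf, rfl⟩, hs⟩ := exists_lt_of_lt_csSup hne hn
      obtain ⟨q, h1, h2, h3, h4⟩ := round_exists hint z (γ 0 + γ n) f hfz (abs_of_lip hf) δ hδ0 hδ1
      refine ⟨q, h1, h2, h3, fun _ => ?_⟩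
      change c' < prr (γ 0 + γ n) f at hs
      have := hnorm n
      nlinarith
    · obtain ⟨q, h1, h2, h3, h4⟩ :=
        round_exists hint z (γ 0 + γ n) (fun _ => 0) rfl (by simp) δ hδ0 hδ1
      exact ⟨q, h1, h2, h3, fun h => absurd h hn⟩
  choose q hqz hqL hqV hqc using hqex
  -- the ultrafilter
  have : NeBot (atTop ⊓ 𝓟 {n | c' < freeNorm z (γ 0 + γ n)}) := by
    rw [← frequently_mem_iff_neBot]; exact hfreq
  let U : Ultrafilter ℕ := Ultrafilter.of (atTop ⊓ 𝓟 {n | c' < freeNorm z (γ 0 + γ n)})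
  have hU := Ultrafilter.of_le (atTop ⊓ 𝓟 {n | c' < freeNorm z (γ 0 + γ n)})
  have hUtop : (U : Filter ℕ) ≤ atTop := hU.trans inf_le_left
  have hUS : ∀ᶠ n in (U : Filter ℕ), c' < freeNorm z (γ 0 + γ n) :=
    hU (mem_inf_of_right (mem_principal_self _))
  have hUz : ∀ᶠ n in (U : Filter ℕ), z ∉ F n := by
    apply hUtop
    by_cases h : ∃ m, z ∈ F m
    · obtain ⟨m, hm⟩ := h
      filter_upwards [eventually_gt_atTop m] with n hn hz
      exact Finset.disjoint_left.1 (hF m n hn.ne) hm hz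
    · push Not at h
      exact Eventually.of_forall h
  have hUh : ∀ x, ∃ v, ∀ᶠ n in (U : Filter ℕ), q n x = v := by
    intro x
    have h1 : ∀ᶠ n in (U : Filter ℕ), ∃ v ∈ (V : Set ℝ), q n x = v :=
      Eventually.of_forall (fun n => ⟨_, hqV n x, rfl⟩)
    obtain ⟨v, _, hv⟩ := (Ultrafilter.eventually_exists_mem_iff V.finite_toSet).1 h1
    exact ⟨v, hv⟩
  choose h hh using hUh
  have hUh0 : ∀ᶠ n in (U : Filter ℕ), ∀ x ∈ F 0, q n x = h x := by
    rw [eventually_all_finset]; exact fun x _ => hh x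
  -- masses
  let W : Finset ℝ := (Finset.range (N + 1)).image (fun k : ℕ => (k : ℝ))
  have hW : ∀ x y : M, dist x y ∈ W := by
    intro x y
    obtain ⟨k, hk, hd⟩ := hint x y
    exact Finset.mem_image.2 ⟨k, by simpa [Nat.lt_succ_iff] using hk, hd.symm⟩
  let X : ℕ → ℕ → Finset M := fun m p =>
    (F p).filter (fun x => ∃ y ∈ F m, 3 * dist x y < |q m y - q p x|)
  have hmass : ∀ η > 0, ∀ᶠ m in (U : Filter ℕ), ∀ᶠ p in (U : Filter ℕ),
      ∑ x ∈ X m p, |γ p x| < η := by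
    intro η hη
    refine mass_core U F q V W hW hqV hqL (fun n x => |γ n x|) (fun _ _ => abs_nonneg _) (2 * C)
      ?_ η hη
    filter_upwards [hUz] with p hp
    exact (l1_bound hint z (γ p) (F p) (hsupp p) hp).trans (by linarith [hC p])
  obtain ⟨η, hη, hηc⟩ : ∃ η : ℝ, 0 < η ∧ c < c2 - η * (4 * N) := by
    refine ⟨(c2 - c) / (4 * N + 1), div_pos (by linarith) (by positivity), ?_⟩
    have : (c2 - c) / (4 * N + 1) * (4 * N + 1) = c2 - c := by field_simp
    have h2 : 0 < (c2 - c) / (4 * N + 1) := div_pos (by linarith) (by positivity)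
    nlinarith
  let P : ℕ × ℕ → Prop := fun t => (0 < t.2 ∧ z ∉ F t.2 ∧ c' < freeNorm z (γ 0 + γ t.2) ∧
    (∀ x ∈ F 0, q t.2 x = h x)) ∧
    ∀ᶠ p in (U : Filter ℕ), ∑ x ∈ X t.2 p, |γ p x| < η / 2 / 2 ^ t.1
  let r : ℕ × ℕ → ℕ × ℕ → Prop := fun t t' => t.1 < t'.1 ∧ t.2 < t'.2 ∧
    ∑ x ∈ X t.2 t'.2, |γ t'.2 x| < η / 2 / 2 ^ t.1
  obtain ⟨φ, hφP, hφr⟩ := exists_seq_of_forall_finset_exists P r (by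
    intro s hs
    have e1 : ∀ᶠ p in (U : Filter ℕ), ∀ t ∈ s, ∑ x ∈ X t.2 p, |γ p x| < η / 2 / 2 ^ t.1 := by
      rw [eventually_all_finset]; exact fun t ht => (hs t ht).2
    have e2 : ∀ᶠ p in (U : Filter ℕ), ∀ t ∈ s, t.2 < p := by
      rw [eventually_all_finset]; exact fun t ht => hUtop (eventually_gt_atTop _)
    have e3 : ∀ᶠ k in (atTop : Filter ℕ), ∀ t ∈ s, t.1 < k := by
      rw [eventually_all_finset]; exact fun t ht => eventually_gt_atTop _
    obtain ⟨k, hk⟩ := e3.exists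
    have e4 := hmass (η / 2 / 2 ^ k) (by positivity)
    have e5 : ∀ᶠ p in (U : Filter ℕ), 0 < p := hUtop (eventually_gt_atTop _)
    obtain ⟨n, hn1, hn2, hn4, hn5, hnz, hnS, hnh⟩ :=
      (e1.and (e2.and (e4.and (e5.and (hUz.and (hUS.and hUh0)))))).exists
    exact ⟨(k, n), ⟨⟨hn5, hnz, hnS, hnh⟩, hn4⟩, fun t ht => ⟨hk t ht, hn2 t ht, hn1 t ht⟩⟩)
  let ν : ℕ → ℕ := fun i => (φ i).2
  have hνmono : StrictMono ν := fun i l hil => (hφr i l hil).2.1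
  have hkmono : StrictMono (fun i => (φ i).1) := fun i l hil => (hφr i l hil).1
  let Bad : ℕ → Finset M := fun i => (Finset.range i).biUnion (fun l => X (ν l) (ν i))
  have hBadF : ∀ i, Bad i ⊆ F (ν i) := by
    intro i x hx
    obtain ⟨l, _, hx⟩ := Finset.mem_biUnion.1 hx
    exact (Finset.mem_filter.1 hx).1
  have hBad : ∀ i, ∑ x ∈ Bad i, |γ (ν i) x| ≤ η := by
    intro i
    calc _ ≤ ∑ l ∈ Finset.range i, ∑ x ∈ X (ν l) (ν i), |γ (ν i) x| := by
          exact sum_biUnion_le' _ _ _ (fun _ => abs_nonneg _)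
      _ ≤ ∑ l ∈ Finset.range i, η / 2 / 2 ^ l := by
          apply Finset.sum_le_sum
          intro l hl
          refine (hφr l i (Finset.mem_range.1 hl)).2.2.le.trans ?_
          have : l ≤ (φ l).1 := hkmono.le_apply
          gcongr
          norm_num
      _ ≤ ∑' l : ℕ, η / 2 / 2 ^ l :=
          (summable_geometric_two' η).sum_le_tsum _ (fun l _ => by positivity)
      _ = η := tsum_geometric_two' η
  let A : ℕ → Set M := fun i => {x | x = z ∨ x ∈ F 0 ∨ (x ∈ F (ν i) ∧ x ∉ Bad i)}
  have hcommon : ∀ i l x, (x = z ∨ x ∈ F 0) → q (ν i) x = q (ν l) x := by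
    rintro i l x (rfl | hx)
    · rw [hqz, hqz]
    · exact ((hφP i).1.2.2.2 x hx).trans ((hφP l).1.2.2.2 x hx).symm
  have hlt : ∀ i l x y, i < l → x ∈ F (ν i) → y ∈ F (ν l) → y ∉ Bad l →
      |q (ν i) x - q (ν l) y| ≤ 3 * dist x y := by
    intro i l x y hil hx hy hyB
    by_contra hcon
    push Not at hcon
    apply hyB
    refine Finset.mem_biUnion.2 ⟨i, Finset.mem_range.2 hil, Finset.mem_filter.2 ⟨hy, x, hx, ?_⟩⟩
    rwa [dist_comm]
  obtain ⟨g, hgL, hgA⟩ := glue_s14 A (fun i => q (ν i)) (by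
    intro i l x y hx hy
    have h1 : |q (ν i) x - q (ν i) y| ≤ 3 * dist x y := by
      linarith [hqL (ν i) x y, dist_nonneg (x := x) (y := y)]
    have h2 : |q (ν l) x - q (ν l) y| ≤ 3 * dist x y := by
      linarith [hqL (ν l) x y, dist_nonneg (x := x) (y := y)]
    by_cases hx0 : x = z ∨ x ∈ F 0
    · rw [hcommon i l x hx0]; exact h2
    by_cases hy0 : y = z ∨ y ∈ F 0
    · rw [hcommon l i y hy0]; exact h1
    have hx1 : x ∈ F (ν i) ∧ x ∉ Bad i := by
      simp only [A, Set.mem_ofPred_eq] at hx; tauto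
    have hy1 : y ∈ F (ν l) ∧ y ∉ Bad l := by
      simp only [A, Set.mem_ofPred_eq] at hy; tauto
    rcases lt_trichotomy i l with hil | rfl | hil
    · exact hlt i l x y hil hx1.1 hy1.1 hy1.2
    · exact h1
    · rw [abs_sub_comm, dist_comm]
      exact hlt l i y x hil hy1.1 hx1.1 hx1.2)
  have hgz : g z = 0 := by rw [hgA 0 z (Or.inl rfl)]; exact hqz _
  have hgabs : ∀ x y, |g x - g y| ≤ 3 * dist x y := fun x y => by
    simpa [Real.dist_eq] using hgL.dist_le_mul x y
  refine ⟨g, hgz, hgL, ?_⟩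
  refine hηc.trans_le ?_
  apply le_limsup_of_frequently_le
  · rw [frequently_atTop]
    intro b
    refine ⟨ν b, hνmono.le_apply, ?_⟩
    change _ ≤ prr (γ 0 + γ (ν b)) g
    have h1 : c2 ≤ prr (γ 0 + γ (ν b)) (q (ν b)) := hqc _ (hφP b).1.2.2.1
    have hs : (γ 0 + γ (ν b)).support ⊆ F 0 ∪ F (ν b) :=
      Finsupp.support_add.trans (Finset.union_subset_union (hsupp _) (hsupp _))
    rw [prr_subset _ _ _ hs] at h1 ⊢
    have h2 : ∑ x ∈ F 0 ∪ F (ν b), (γ 0 + γ (ν b)) x * q (ν b) x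
        - ∑ x ∈ F 0 ∪ F (ν b), (γ 0 + γ (ν b)) x * g x
        = ∑ x ∈ Bad b, (γ 0 + γ (ν b)) x * (q (ν b) x - g x) := by
      rw [← Finset.sum_sub_distrib]
      symm
      rw [Finset.sum_congr rfl (fun x _ => mul_sub _ _ _)]
      apply Finset.sum_subset ((hBadF b).trans Finset.subset_union_right)
      intro x hx hxB
      have : g x = q (ν b) x := hgA b x (by
        rcases Finset.mem_union.1 hx with hx | hx
        · exact Or.inr (Or.inl hx)
        · exact Or.inr (Or.inr ⟨hx, hxB⟩))
      rw [this, sub_self]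
    have h3 : ∑ x ∈ Bad b, (γ 0 + γ (ν b)) x * (q (ν b) x - g x)
        ≤ ∑ x ∈ Bad b, |γ (ν b) x| * (4 * N) := by
      apply Finset.sum_le_sum
      intro x hx
      have h0 : γ 0 x = 0 := by
        by_contra hne
        have hx0 := hsupp 0 (Finsupp.mem_support_iff.2 hne)
        exact Finset.disjoint_left.1 (hF 0 (ν b) (hφP b).1.1.ne) hx0 (hBadF b hx)
      have hd := fn_dist_le hint x z
      have e1 := hqL (ν b) x z
      have e2 := hgabs x z
      rw [hqz, sub_zero] at e1
      rw [hgz, sub_zero] at e2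
      have e3 := abs_sub (q (ν b) x) (g x)
      rw [Finsupp.add_apply, h0, zero_add]
      calc _ ≤ |γ (ν b) x * (q (ν b) x - g x)| := le_abs_self _
        _ = |γ (ν b) x| * |q (ν b) x - g x| := abs_mul _ _
        _ ≤ _ := mul_le_mul_of_nonneg_left (by linarith) (abs_nonneg _)
    rw [← Finset.sum_mul] at h3
    have h4 := mul_le_mul_of_nonneg_right (hBad b) (show (0 : ℝ) ≤ 4 * N by positivity)
    linarith
  · refine ⟨3 * (2 * C), ?_⟩
    simp only [eventually_map]
    refine Eventually.of_forall (fun n => ?_)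
    change prr (γ 0 + γ n) g ≤ _
    have := prr_le_mul hint z (γ 0 + γ n) g 3 (by norm_num) hgz hgabs
    linarith [hnorm n]
end

section
/- Let N ∈ ℕ and let (M,d) be a pointed metric space with base point 0 such that d takes only the values 0,1,…,N. Let (μ_n) be a sequence of summable functions μ_n : M → ℝ (i.e., Σ_{x∈M} |μ_n(x)| < ∞) with sup_n ‖μ_n‖ < ∞ (free norm), and assume limsup_n ‖μ_n‖ > c for some c > 0. Then there exists a 3-Lipschitz function g : M → ℝ with g(0) = 0 such that limsup_n Σ_{x∈M} μ_n(x)·g(x) > c. (Here the pairing sum converges absolutely since every Lipschitz function vanishing at 0 is bounded on M, and summable functions with the free norm represent exactly the elements of the Lipschitz-free space F(M) for such M.) -/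
open Filter

/-- The free norm of a summable function `μ : M → ℝ` over a pointed metric space
`(M, z)`: the supremum of `∑' x, μ x * f x` over all `1`-Lipschitz `f` vanishing at
the base point. -/
noncomputable def freeNormSummable {M : Type*} [MetricSpace M] (z : M) (μ : M → ℝ) : ℝ :=
  sSup {s | ∃ f : M → ℝ, f z = 0 ∧ LipschitzWith 1 f ∧ s = ∑' x : M, μ x * f x}

open Topology

lemma aux_ulim (b : ℕ → ℝ) (A : ℝ) (h : ∀ᶠ n in (hyperfilter ℕ : Filter ℕ), |b n| ≤ A) :
    ∃ L, Tendsto b (hyperfilter ℕ : Filter ℕ) (𝓝 L) := by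
  have := (isCompact_Icc (a := -A) (b := A)).ultrafilter_le_nhds ((hyperfilter ℕ).map b) (by
    rw [le_principal_iff]
    change ∀ᶠ n in (hyperfilter ℕ : Filter ℕ), b n ∈ Set.Icc (-A) A
    filter_upwards [h] with n hn
    exact abs_le.mp hn)
  obtain ⟨L, -, hL⟩ := this
  exact ⟨L, hL⟩

lemma aux_hyper_gt (m : ℕ) : ∀ᶠ n in (hyperfilter ℕ : Filter ℕ), m < n :=
  Nat.hyperfilter_le_atTop (eventually_gt_atTop m)

lemma aux_tail {α : Type*} (u : α → ℝ) (h0 : ∀ x, 0 ≤ u x) (C : ℝ)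
    (hC : ∀ T : Finset α, ∑ x ∈ T, u x ≤ C) (δ : ℝ) (hδ : 0 < δ) :
    ∃ F : Finset α, ∀ T : Finset α, Disjoint T F → ∑ x ∈ T, u x ≤ δ := by
  have hs : Summable u := summable_of_sum_le h0 hC
  obtain ⟨F, hF⟩ := summable_iff_vanishing_norm.mp hs δ hδ
  exact ⟨F, fun T hT => (le_abs_self _).trans (hF T hT).le⟩

lemma aux_subseq (w : ℕ → ℕ → ℝ) (h0 : ∀ j l, 0 ≤ w j l) (K : ℝ)
    (hK : ∀ l, ∑ j ∈ Finset.range l, w j l ≤ K) (ε : ℝ) (hε : 0 < ε) :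
    ∃ s : ℕ → ℕ, StrictMono s ∧ ∀ l, ∑ i ∈ Finset.range l, w (s i) (s l) ≤ ε := by
  have hlim : ∀ j, ∃ L, Tendsto (fun l => w j l) (hyperfilter ℕ : Filter ℕ) (𝓝 L) := by
    intro j
    apply aux_ulim _ K
    filter_upwards [aux_hyper_gt j] with l hl
    rw [abs_of_nonneg (h0 _ _)]
    exact (Finset.single_le_sum (f := fun j => w j l) (fun i _ => h0 i l)
      (Finset.mem_range.mpr hl)).trans (hK l)
  choose v hv using hlim
  have hv0 : ∀ j, 0 ≤ v j := fun j => ge_of_tendsto' (hv j) (fun l => h0 j l)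
  have hvK : ∀ T : Finset ℕ, ∑ j ∈ T, v j ≤ K := by
    intro T
    refine le_of_tendsto (tendsto_finsetSum T (fun j _ => hv j)) ?_
    obtain ⟨m, hm⟩ := T.exists_nat_subset_range
    filter_upwards [aux_hyper_gt m] with l hl
    refine (Finset.sum_le_sum_of_subset_of_nonneg ?_ (fun i _ _ => h0 i l)).trans (hK l)
    exact hm.trans (Finset.range_subset_range.mpr hl.le)
  have hsv : Summable v := summable_of_sum_le hv0 hvK
  have hsg : Summable (fun j : ℕ => ((1:ℝ)/2)^j) := summable_geometric_two
  obtain ⟨F, hF⟩ := summable_iff_vanishing_norm.mp (hsv.add hsg) ε hε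
  obtain ⟨s, hs1, hs2⟩ := exists_seq_of_forall_finset_exists (fun j : ℕ => j ∉ F)
    (fun j l => j < l ∧ w j l ≤ v j + (1/2)^j) (by
      intro T _
      have h1 : ∀ᶠ l in (hyperfilter ℕ : Filter ℕ), ∀ j ∈ T, j < l ∧ w j l ≤ v j + (1/2)^j := by
        rw [Filter.eventually_all_finset]
        intro j _
        refine (aux_hyper_gt j).and ?_
        exact (hv j).eventually (eventually_le_nhds (by
          have : (0:ℝ) < (1/2)^j := by positivity
          linarith))
      have h2 : ∀ᶠ l in (hyperfilter ℕ : Filter ℕ), l ∉ F := by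
        obtain ⟨m, hm⟩ := F.exists_nat_subset_range
        filter_upwards [aux_hyper_gt m] with l hl hlF
        have := Finset.mem_range.mp (hm hlF)
        omega
      obtain ⟨l, hl⟩ := (h1.and h2).exists
      exact ⟨l, hl.2, hl.1⟩)
  have hmono : StrictMono s := fun a b hab => (hs2 a b hab).1
  refine ⟨s, hmono, fun l => ?_⟩
  calc ∑ i ∈ Finset.range l, w (s i) (s l)
      ≤ ∑ i ∈ Finset.range l, (v (s i) + (1/2)^(s i)) :=
        Finset.sum_le_sum fun i hi => (hs2 i l (Finset.mem_range.mp hi)).2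
    _ = ∑ j ∈ (Finset.range l).image s, (v j + (1/2)^j) := by
        rw [Finset.sum_image (fun a _ b _ h => hmono.injective h)]
    _ ≤ ε := by
        refine (le_abs_self _).trans (hF _ ?_).le
        rw [Finset.disjoint_left]
        intro a ha
        obtain ⟨i, -, rfl⟩ := Finset.mem_image.mp ha
        exact hs1 i

lemma aux_core {M : Type*} [MetricSpace M] (z : M) (N : ℕ)
    (hint : ∀ x y : M, ∃ k : ℕ, k ≤ N ∧ dist x y = k)
    (μ : ℕ → M → ℝ) (C : ℝ) (hC : ∀ n, ∀ T : Finset M, ∑ x ∈ T, |μ n x| ≤ C)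
    (f : ℕ → M → ℝ) (hfz : ∀ n, f n z = 0) (hf : ∀ n x y, |f n x - f n y| ≤ dist x y)
    (δ : ℝ) (hδ : 0 < δ) (hδ1 : δ ≤ 1) :
    ∃ g : M → ℝ, g z = 0 ∧ (∀ x y, |g x - g y| ≤ (3 + 2 * δ) * dist x y) ∧
      ∀ m : ℕ, ∃ n ≥ m, ∀ T : Finset M,
        ∑ x ∈ T, |μ n x| * |g x - f n x| ≤ δ * (C + 24 * N) := by
  classical
  have hdN : ∀ x y : M, dist x y ≤ N := by
    intro x y
    obtain ⟨k, hk, h⟩ := hint x y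
    rw [h]; exact_mod_cast hk
  have hd1 : ∀ x y : M, x ≠ y → 1 ≤ dist x y := by
    intro x y hxy
    obtain ⟨k, hk, h⟩ := hint x y
    have : 0 < dist x y := dist_pos.mpr hxy
    rw [h] at this ⊢
    exact_mod_cast this
  have hfN : ∀ n x, |f n x| ≤ N := by
    intro n x
    have := hf n x z
    rw [hfz, sub_zero] at this
    exact this.trans (hdN _ _)
  have h1 : ∀ x, ∃ L, Tendsto (fun n => f n x) (hyperfilter ℕ : Filter ℕ) (𝓝 L) :=
    fun x => aux_ulim _ N (Eventually.of_forall fun n => hfN n x)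
  have h2 : ∀ x, ∃ L, Tendsto (fun n => |μ n x|) (hyperfilter ℕ : Filter ℕ) (𝓝 L) :=
    fun x => aux_ulim _ C (Eventually.of_forall fun n => by
      have := hC n {x}
      simpa using this)
  choose F hF using h1
  choose u hu using h2
  have hu0 : ∀ x, 0 ≤ u x := fun x => ge_of_tendsto' (hu x) (fun n => abs_nonneg _)
  have huC : ∀ T : Finset M, ∑ x ∈ T, u x ≤ C := fun T =>
    le_of_tendsto' (tendsto_finsetSum T (fun j _ => hu j)) (fun n => hC n T)
  have hFz : F z = 0 := by
    refine tendsto_nhds_unique (hF z) ?_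
    simp [hfz]
  have hFL : ∀ x y, |F x - F y| ≤ dist x y := fun x y =>
    le_of_tendsto' ((hF x).sub (hF y)).abs (fun n => hf n x y)
  obtain ⟨F0', hF0'⟩ := aux_tail u hu0 C huC δ hδ
  obtain ⟨F0, hzF0, hF0⟩ : ∃ F0 : Finset M, z ∈ F0 ∧
      ∀ T : Finset M, Disjoint T F0 → ∑ x ∈ T, u x ≤ δ :=
    ⟨insert z F0', Finset.mem_insert_self _ _, fun T hT =>
      hF0' T (hT.mono_right (Finset.subset_insert _ _))⟩
  -- the sequence
  obtain ⟨p, hp1, hp2⟩ := exists_seq_of_forall_finset_exists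
    (fun q : ℕ × Finset M => (∀ x ∈ F0, |f q.1 x - F x| ≤ δ) ∧ Disjoint q.2 F0 ∧
      ∀ T : Finset M, Disjoint T (F0 ∪ q.2) → ∑ x ∈ T, |μ q.1 x| ≤ 3 * δ)
    (fun q r : ℕ × Finset M => q.1 < r.1 ∧ Disjoint q.2 r.2 ∧ ∀ x ∈ q.2, |f r.1 x - F x| ≤ δ) (by
      intro s _
      set E : Finset M := F0 ∪ s.biUnion (fun q => q.2) with hE
      have e1 : ∀ᶠ n in (hyperfilter ℕ : Filter ℕ), ∀ x ∈ E, |f n x - F x| ≤ δ := by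
        rw [Filter.eventually_all_finset]
        intro x _
        have : Tendsto (fun n => |f n x - F x|) (hyperfilter ℕ : Filter ℕ) (𝓝 0) := by
          simpa using ((hF x).sub_const (F x)).abs
        exact this.eventually (eventually_le_nhds hδ)
      have e2 : ∀ᶠ n in (hyperfilter ℕ : Filter ℕ), ∀ q ∈ s, q.1 < n := by
        rw [Filter.eventually_all_finset]
        intro q _
        exact aux_hyper_gt _
      have e3 : ∀ᶠ n in (hyperfilter ℕ : Filter ℕ), ∑ x ∈ E \ F0, |μ n x| ≤ 2 * δ := by
        refine (tendsto_finsetSum (E \ F0) (fun j _ => hu j)).eventually (eventually_le_nhds ?_)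
        have := hF0 (E \ F0) Finset.sdiff_disjoint
        linarith
      obtain ⟨n, hn1, hn2, hn3⟩ := (e1.and (e2.and e3)).exists
      obtain ⟨G, hG⟩ := aux_tail (fun x => |μ n x|) (fun x => abs_nonneg _) C (hC n) δ hδ
      refine ⟨(n, G \ E), ⟨?_, ?_, ?_⟩, ?_⟩
      · intro x hx
        exact hn1 x (Finset.mem_union_left _ hx)
      · exact Finset.sdiff_disjoint.mono_right Finset.subset_union_left
      · intro T hT
        have hT' : ∀ x ∈ T, x ∉ F0 ∧ (x ∈ G → x ∈ E) := by
          intro x hx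
          have := Finset.disjoint_left.mp hT hx
          simp only [Finset.mem_union, Finset.mem_sdiff] at this
          tauto
        have k1 : ∑ x ∈ T ∩ E, |μ n x| ≤ 2 * δ := by
          refine (Finset.sum_le_sum_of_subset_of_nonneg ?_ (fun _ _ _ => abs_nonneg _)).trans hn3
          intro x hx
          rw [Finset.mem_inter] at hx
          exact Finset.mem_sdiff.mpr ⟨hx.2, (hT' x hx.1).1⟩
        have k2 : ∑ x ∈ T \ E, |μ n x| ≤ δ := by
          apply hG
          rw [Finset.disjoint_left]
          intro x hx hxG
          rw [Finset.mem_sdiff] at hx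
          exact hx.2 ((hT' x hx.1).2 hxG)
        have := Finset.sum_inter_add_sum_sdiff T E (fun x => |μ n x|)
        simp only
        linarith
      · intro q hq
        have hqE : q.2 ⊆ E := (Finset.subset_biUnion_of_mem (fun q : ℕ × Finset M => q.2) hq).trans
          Finset.subset_union_right
        refine ⟨hn2 q hq, ?_, fun x hx => hn1 x (hqE hx)⟩
        exact (Finset.sdiff_disjoint.mono_right hqE).symm)
  -- bad points
  let bad : ℕ → ℕ → M → Prop := fun j l x => ∃ y ∈ (p j).2,
    3 * dist x y + 2 * δ < |f (p l).1 x - f (p j).1 y|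
  let w : ℕ → ℕ → ℝ := fun j l => ∑ x ∈ (p l).2, if bad j l x then |μ (p l).1 x| else 0
  have hw0 : ∀ j l, 0 ≤ w j l := fun j l => Finset.sum_nonneg fun x _ => by
    split_ifs
    · exact abs_nonneg _
    · exact le_rfl
  have hcard : ∀ l x, ((Finset.range l).filter (fun j => bad j l x)).card ≤ N + 1 := by
    intro l x
    have hch : ∀ j, ∃ y, bad j l x → y ∈ (p j).2 ∧
        3 * dist x y + 2 * δ < |f (p l).1 x - f (p j).1 y| := by
      intro j
      by_cases h : bad j l x
      · obtain ⟨y, hy⟩ := h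
        exact ⟨y, fun _ => hy⟩
      · exact ⟨x, fun h' => absurd h' h⟩
    choose Y hY using hch
    have hk : ∀ j, ∃ k : ℕ, k ≤ N ∧ dist x (Y j) = k := fun j => hint x (Y j)
    choose k hkN hk using hk
    have hlt : ∀ i j, i < j → j < l → bad i l x → bad j l x → k j < k i := by
      intro i j hij hjl hi hj
      obtain ⟨hi1, hi2⟩ := hY i hi
      obtain ⟨hj1, hj2⟩ := hY j hj
      have a1 := (hp2 i j hij).2.2 _ hi1
      have a2 := (hp2 i l (hij.trans hjl)).2.2 _ hi1
      have a3 := hf (p j).1 (Y j) (Y i)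
      have a4 := hf (p l).1 x (Y i)
      have a5 := dist_triangle_left (Y j) (Y i) x
      have : dist x (Y j) < dist x (Y i) := by
        rw [abs_le] at a1 a2 a3 a4
        rw [lt_abs] at hj2
        rcases hj2 with h | h <;> linarith
      rw [hk, hk] at this
      exact_mod_cast this
    calc _ ≤ (Finset.range (N+1)).card := by
          apply Finset.card_le_card_of_injOn k
          · intro j _
            have := hkN j
            simp only [Finset.coe_range, Set.mem_Iio]
            omega
          · intro i hi j hj hij
            simp only [Finset.coe_filter, Finset.mem_range, Set.mem_setOf_eq] at hi hj
            rcases lt_trichotomy i j with h | h | h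
            · have := hlt i j h hj.1 hi.2 hj.2
              omega
            · exact h
            · have := hlt j i h hi.1 hj.2 hi.2
              omega
      _ = N + 1 := by simp
  have hwK : ∀ l, ∑ j ∈ Finset.range l, w j l ≤ (N + 1) * C := by
    intro l
    have : ∑ j ∈ Finset.range l, w j l = ∑ x ∈ (p l).2,
        (((Finset.range l).filter (fun j => bad j l x)).card : ℝ) * |μ (p l).1 x| := by
      simp only [w]
      rw [Finset.sum_comm]
      refine Finset.sum_congr rfl fun x _ => ?_
      rw [← Finset.sum_filter, Finset.sum_const, nsmul_eq_mul]
    rw [this]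
    calc _ ≤ ∑ x ∈ (p l).2, ((N:ℝ) + 1) * |μ (p l).1 x| :=
          Finset.sum_le_sum fun x _ => mul_le_mul_of_nonneg_right (by exact_mod_cast hcard l x)
            (abs_nonneg _)
      _ = ((N:ℝ) + 1) * ∑ x ∈ (p l).2, |μ (p l).1 x| := by rw [Finset.mul_sum]
      _ ≤ _ := mul_le_mul_of_nonneg_left (hC _ _) (by positivity)
  obtain ⟨s, hs, hsw⟩ := aux_subseq w hw0 _ hwK δ hδ
  -- good points
  let good : ℕ → M → Prop := fun i x => x ∈ (p (s i)).2 ∧ ∀ j < i, ¬ bad (s j) (s i) x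
  have hdisj : ∀ i j x, x ∈ (p i).2 → x ∈ (p j).2 → i = j := by
    intro i j x hi hj
    rcases lt_trichotomy i j with h | h | h
    · exact absurd hj (Finset.disjoint_left.mp (hp2 i j h).2.1 hi)
    · exact h
    · exact absurd hi (Finset.disjoint_left.mp (hp2 j i h).2.1 hj)
  let g0 : M → ℝ := fun x => if h : ∃ i, good i x then f (p (s h.choose)).1 x else F x
  have hg0 : ∀ i x, good i x → g0 x = f (p (s i)).1 x := by
    intro i x h
    have hex : ∃ i, good i x := ⟨i, h⟩
    have heq : hex.choose = i := hs.injective (hdisj _ _ x hex.choose_spec.1 h.1)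
    simp only [g0]
    rw [dif_pos hex, heq]
  have hg0F : ∀ x ∈ F0, g0 x = F x := by
    intro x hx
    simp only [g0]
    rw [dif_neg]
    rintro ⟨i, hi⟩
    exact Finset.disjoint_left.mp (hp1 (s i)).2.1 hi.1 hx
  let D : Set M := {x | x ∈ F0 ∨ ∃ i, good i x}
  have hfg : ∀ x ∈ F0, ∀ i y, good i y → |g0 x - g0 y| ≤ (3 + 2 * δ) * dist x y := by
    intro x hx i y hy
    rw [hg0F x hx, hg0 i y hy]
    have hxy : x ≠ y := by
      rintro rfl
      exact Finset.disjoint_left.mp (hp1 (s i)).2.1 hy.1 hx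
    have b1 := hd1 x y hxy
    have b2 := (hp1 (s i)).1 x hx
    have b3 := hf (p (s i)).1 x y
    rw [abs_le] at *
    constructor <;> nlinarith
  have hgg : ∀ i x j y, j < i → good i x → good j y →
      |g0 x - g0 y| ≤ (3 + 2 * δ) * dist x y := by
    intro i x j y hji hx hy
    rw [hg0 i x hx, hg0 j y hy]
    have hxy : x ≠ y := by
      rintro rfl
      exact absurd (hs.injective (hdisj _ _ x hx.1 hy.1)) (by omega)
    have b1 := hd1 x y hxy
    have b2 := hx.2 j hji
    simp only [bad, not_exists, not_and, not_lt] at b2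
    have b3 := b2 y hy.1
    nlinarith
  have hLD : ∀ x ∈ D, ∀ y ∈ D, |g0 x - g0 y| ≤ (3 + 2 * δ) * dist x y := by
    have hle : ∀ x y : M, dist x y ≤ (3 + 2 * δ) * dist x y := fun x y => by
      have := dist_nonneg (x := x) (y := y)
      nlinarith
    rintro x (hx | ⟨i, hx⟩) y (hy | ⟨j, hy⟩)
    · rw [hg0F x hx, hg0F y hy]
      exact (hFL x y).trans (hle x y)
    · exact hfg x hx j y hy
    · rw [abs_sub_comm, dist_comm]
      exact hfg y hy i x hx
    · rcases lt_trichotomy i j with h | h | h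
      · rw [abs_sub_comm, dist_comm]
        exact hgg j y i x h hy hx
      · subst h
        rw [hg0 i x hx, hg0 i y hy]
        exact (hf _ x y).trans (hle x y)
      · exact hgg i x j y h hx hy
  have hKnn : 0 ≤ 3 + 2 * δ := by linarith
  have hLip : LipschitzOnWith (Real.toNNReal (3 + 2 * δ)) g0 D := by
    apply LipschitzOnWith.of_dist_le_mul
    intro x hx y hy
    rw [Real.dist_eq, Real.coe_toNNReal _ hKnn]
    exact hLD x hx y hy
  obtain ⟨g, hgL, hgE⟩ := hLip.extend_real
  have hgz : g z = 0 := by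
    rw [← hgE (show z ∈ D from Or.inl hzF0), hg0F z hzF0, hFz]
  have hgL' : ∀ x y, |g x - g y| ≤ (3 + 2 * δ) * dist x y := by
    intro x y
    have := hgL.dist_le_mul x y
    rwa [Real.dist_eq, Real.coe_toNNReal _ hKnn] at this
  refine ⟨g, hgz, hgL', fun m => ?_⟩
  have hpm : StrictMono (fun i => (p (s i)).1) := fun a b hab => (hp2 _ _ (hs hab)).1
  refine ⟨(p (s m)).1, hpm.le_apply, fun T => ?_⟩
  set n := (p (s m)).1 with hn
  have hN0 : (0:ℝ) ≤ N := Nat.cast_nonneg N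
  have hdiff : ∀ x, |g x - f n x| ≤ 6 * N := by
    intro x
    have c1 := hgL' x z
    rw [hgz, sub_zero] at c1
    have c2 := hfN n x
    have c3 := hdN x z
    have c4 := abs_sub (g x) (f n x)
    have c5 := dist_nonneg (x := x) (y := z)
    nlinarith
  have hpt : ∀ x, |μ n x| * |g x - f n x| ≤ δ * |μ n x|
      + 6 * N * (if x ∉ F0 ∪ (p (s m)).2 then |μ n x| else 0)
      + 6 * N * (if x ∈ (p (s m)).2 ∧ ∃ j < m, bad (s j) (s m) x then |μ n x| else 0) := by
    intro x
    have ha := abs_nonneg (μ n x)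
    have hb : |μ n x| * |g x - f n x| ≤ |μ n x| * (6 * N) :=
      mul_le_mul_of_nonneg_left (hdiff x) ha
    have hδa : 0 ≤ δ * |μ n x| := by positivity
    have hNa : 0 ≤ 6 * N * |μ n x| := by positivity
    by_cases h1 : x ∉ F0 ∪ (p (s m)).2
    · rw [if_pos h1]
      split_ifs <;> nlinarith
    · rw [if_neg h1]
      by_cases h2 : x ∈ (p (s m)).2 ∧ ∃ j < m, bad (s j) (s m) x
      · rw [if_pos h2]
        nlinarith
      · rw [if_neg h2]
        have : |g x - f n x| ≤ δ := by
          rw [not_not, Finset.mem_union] at h1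
          by_cases h3 : x ∈ F0
          · rw [← hgE (show x ∈ D from Or.inl h3), hg0F x h3, abs_sub_comm]
            exact (hp1 (s m)).1 x h3
          · have h4 := h1.resolve_left h3
            have h5 : good m x := ⟨h4, fun j hj hb => h2 ⟨h4, j, hj, hb⟩⟩
            rw [← hgE (show x ∈ D from Or.inr ⟨m, h5⟩), hg0 m x h5]
            simp [hn, hδ.le]
        nlinarith
  have s1 : ∑ x ∈ T, |μ n x| ≤ C := hC n T
  have s2 : ∑ x ∈ T, (if x ∉ F0 ∪ (p (s m)).2 then |μ n x| else 0) ≤ 3 * δ := by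
    rw [← Finset.sum_filter]
    apply (hp1 (s m)).2.2
    rw [Finset.disjoint_left]
    intro x hx
    exact (Finset.mem_filter.mp hx).2
  have s3 : ∑ x ∈ T, (if x ∈ (p (s m)).2 ∧ ∃ j < m, bad (s j) (s m) x then |μ n x| else 0)
      ≤ δ := by
    refine le_trans ?_ (hsw m)
    simp only [w]
    rw [Finset.sum_comm, ← Finset.sum_filter]
    calc ∑ x ∈ T.filter (fun x => x ∈ (p (s m)).2 ∧ ∃ j < m, bad (s j) (s m) x), |μ n x|
        ≤ ∑ x ∈ T.filter (fun x => x ∈ (p (s m)).2 ∧ ∃ j < m, bad (s j) (s m) x),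
          ∑ j ∈ Finset.range m, (if bad (s j) (s m) x then |μ n x| else 0) := by
          apply Finset.sum_le_sum
          intro x hx
          obtain ⟨-, -, j, hj, hb⟩ := Finset.mem_filter.mp hx
          have := Finset.single_le_sum
            (f := fun j => (if bad (s j) (s m) x then |μ n x| else 0)) (s := Finset.range m)
            (fun i _ => by
              split_ifs
              · exact abs_nonneg _
              · exact le_rfl) (Finset.mem_range.mpr hj)
          simpa only [if_pos hb] using this
      _ ≤ _ := by
          apply Finset.sum_le_sum_of_subset_of_nonneg
          · intro x hx
            exact (Finset.mem_filter.mp hx).2.1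
          · intro x _ _
            refine Finset.sum_nonneg fun i _ => ?_
            split_ifs
            · exact abs_nonneg _
            · exact le_rfl
  calc _ ≤ ∑ x ∈ T, (δ * |μ n x|
      + 6 * N * (if x ∉ F0 ∪ (p (s m)).2 then |μ n x| else 0)
      + 6 * N * (if x ∈ (p (s m)).2 ∧ ∃ j < m, bad (s j) (s m) x then |μ n x| else 0)) :=
        Finset.sum_le_sum fun x _ => hpt x
    _ ≤ δ * C + 6 * N * (3 * δ) + 6 * N * δ := by
        rw [Finset.sum_add_distrib, Finset.sum_add_distrib, ← Finset.mul_sum, ← Finset.mul_sum,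
          ← Finset.mul_sum]
        gcongr
    _ = _ := by ring

theorem exists_three_lipschitz_of_limsup_gt
    {M : Type*} [MetricSpace M] (z : M) (N : ℕ)
    (hint : ∀ x y : M, ∃ k : ℕ, k ≤ N ∧ dist x y = k)
    (μ : ℕ → M → ℝ) (hsumm : ∀ n, Summable fun x => |μ n x|)
    (hbdd : ∃ C : ℝ, ∀ n, freeNormSummable z (μ n) ≤ C)
    (c : ℝ) (hc : 0 < c)
    (hlim : c < limsup (fun n => freeNormSummable z (μ n)) atTop) :
    ∃ g : M → ℝ, g z = 0 ∧ LipschitzWith 3 g ∧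
      c < limsup (fun n => ∑' x : M, μ n x * g x) atTop := by
  classical
  obtain ⟨C, hC⟩ := hbdd
  have hdN : ∀ x y : M, dist x y ≤ N := by
    intro x y
    obtain ⟨k, hk, h⟩ := hint x y
    rw [h]; exact_mod_cast hk
  have hd1 : ∀ x y : M, x ≠ y → 1 ≤ dist x y := by
    intro x y hxy
    obtain ⟨k, hk, h⟩ := hint x y
    have : 0 < dist x y := dist_pos.mpr hxy
    rw [h] at this ⊢
    exact_mod_cast this
  -- summability of pairings
  have hsum : ∀ n (h : M → ℝ) (B : ℝ), (∀ x, |h x| ≤ B) → Summable fun x => |μ n x| * |h x| := by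
    intro n h B hB
    refine Summable.of_nonneg_of_le (fun x => by positivity) (fun x => ?_) ((hsumm n).mul_right B)
    exact mul_le_mul_of_nonneg_left (hB x) (abs_nonneg _)
  have hsum' : ∀ n (h : M → ℝ) (B : ℝ), (∀ x, |h x| ≤ B) → Summable fun x => μ n x * h x := by
    intro n h B hB
    refine Summable.of_norm ?_
    simpa only [Real.norm_eq_abs, abs_mul] using hsum n h B hB
  have hlipN : ∀ f : M → ℝ, f z = 0 → LipschitzWith 1 f → ∀ x, |f x| ≤ N := by
    intro f hz hf x
    have := hf.dist_le_mul x z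
    rw [Real.dist_eq, hz, sub_zero] at this
    simp only [NNReal.coe_one, one_mul] at this
    exact this.trans (hdN _ _)
  have hba : ∀ n, BddAbove {s | ∃ f : M → ℝ, f z = 0 ∧ LipschitzWith 1 f ∧
      s = ∑' x : M, μ n x * f x} := by
    intro n
    refine ⟨∑' x, |μ n x| * N, ?_⟩
    rintro _ ⟨f, hz, hf, rfl⟩
    refine Summable.tsum_le_tsum (fun x => ?_) (hsum' n f N (hlipN f hz hf))
      ((hsumm n).mul_right _)
    calc μ n x * f x ≤ |μ n x * f x| := le_abs_self _
      _ = |μ n x| * |f x| := abs_mul _ _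
      _ ≤ _ := mul_le_mul_of_nonneg_left (hlipN f hz hf x) (abs_nonneg _)
  -- kill the base point
  let ν : ℕ → M → ℝ := fun n x => if x = z then 0 else μ n x
  have hνle : ∀ n x, |ν n x| ≤ |μ n x| := by
    intro n x
    simp only [ν]
    split_ifs
    · simp
    · exact le_rfl
  have hνC : ∀ n (T : Finset M), ∑ x ∈ T, |ν n x| ≤ 2 * C := by
    intro n T
    let h : M → ℝ := fun x => if 0 ≤ ν n x then (if x = z then 0 else 1/2) else -1/2
    have hhz : h z = 0 := by simp [h, ν]
    have hhb : ∀ x, |h x| ≤ 1/2 := by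
      intro x
      simp only [h]
      split_ifs <;> norm_num [abs_le]
    have hhL : LipschitzWith 1 h := by
      apply LipschitzWith.of_dist_le_mul
      intro x y
      by_cases hxy : x = y
      · simp [hxy]
      · have e1 := hd1 x y hxy
        have e2 := abs_sub (h x) (h y)
        have e3 := hhb x
        have e4 := hhb y
        rw [Real.dist_eq]
        simp only [NNReal.coe_one, one_mul]
        linarith
    have e : ∀ x, μ n x * h x = |ν n x| / 2 := by
      intro x
      by_cases hx : x = z
      · subst hx
        simp [hhz, ν]
      · have : μ n x = ν n x := by simp [ν, hx]
        rw [this]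
        simp only [h]
        split_ifs with h0
        · rw [abs_of_nonneg h0]; ring
        · rw [abs_of_neg (not_le.mp h0)]; ring
    have hle : ∑' x, μ n x * h x ≤ C := (le_csSup (hba n) ⟨h, hhz, hhL, rfl⟩).trans (hC n)
    have hs := hsum' n h _ hhb
    simp only [e] at hle hs
    have := (hs.sum_le_tsum T (fun x _ => by positivity)).trans hle
    rw [← Finset.sum_div] at this
    linarith
  have hC0 : 0 ≤ C := by
    have := hνC 0 ∅
    simp at this
    linarith
  have hpair : ∀ n (h : M → ℝ), h z = 0 → ∀ x, μ n x * h x = ν n x * h x := by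
    intro n h hz x
    by_cases hx : x = z
    · subst hx; simp [hz]
    · simp [ν, hx]
  -- choose subsequence
  obtain ⟨c', hcc', hc'⟩ := exists_between hlim
  have hnn : ∀ n, 0 ≤ freeNormSummable z (μ n) := fun n =>
    le_csSup (hba n) ⟨fun _ => (0:ℝ), rfl, (LipschitzWith.const (0:ℝ)).weaken zero_le_one, by simp⟩
  have hfreq : ∃ᶠ n in atTop, c' < freeNormSummable z (μ n) :=
    frequently_lt_of_lt_limsup (isCoboundedUnder_le_of_le atTop hnn) hc'
  obtain ⟨φ, hφ, hφc⟩ := extraction_of_frequently_atTop hfreq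
  have hex : ∀ n, ∃ f : M → ℝ, f z = 0 ∧ LipschitzWith 1 f ∧ c' < ∑' x, μ (φ n) x * f x := by
    intro n
    have hlt0 : c' < sSup {s | ∃ f : M → ℝ, f z = 0 ∧ LipschitzWith 1 f ∧
      s = ∑' x : M, μ (φ n) x * f x} := hφc n
    obtain ⟨_, ⟨f, hz, hf, rfl⟩, hlt⟩ := exists_lt_of_lt_csSup (by exact
      ⟨_, fun _ => (0:ℝ), rfl, (LipschitzWith.const (0:ℝ)).weaken zero_le_one, rfl⟩) hlt0
    exact ⟨f, hz, hf, hlt⟩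
  choose f hfz hfL hfc using hex
  set R : ℝ := 2 * C + 24 * N with hR
  have hR0 : 0 ≤ R := by positivity
  obtain ⟨δ, hδ, hδ1, hδc⟩ : ∃ δ : ℝ, 0 < δ ∧ δ ≤ 1 ∧ c < (1 - δ) * (c' - δ * R) := by
    have ht : Tendsto (fun δ : ℝ => (1 - δ) * (c' - δ * R)) (𝓝[>] 0) (𝓝 ((1 - 0) * (c' - 0 * R))) := by
      apply Tendsto.mono_left _ nhdsWithin_le_nhds
      apply Continuous.tendsto
      fun_prop
    have h1 := ht.eventually (eventually_gt_nhds (show c < (1 - 0) * (c' - 0 * R) by simpa using hcc'))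
    have h2 : ∀ᶠ δ : ℝ in 𝓝[>] 0, δ ≤ 1 :=
      nhdsWithin_le_nhds (eventually_le_nhds one_pos)
    obtain ⟨δ, a, b, d⟩ := (h1.and (h2.and self_mem_nhdsWithin)).exists
    exact ⟨δ, d, b, a⟩
  obtain ⟨g, hgz, hgL, hg⟩ := aux_core z N hint (fun n => ν (φ n)) (2 * C) (fun n => hνC _)
    f hfz (fun n x y => by
      have := (hfL n).dist_le_mul x y
      simpa [Real.dist_eq] using this) δ hδ hδ1
  set t : ℝ := 3 / (3 + 2 * δ) with ht
  have hpos : 0 < 3 + 2 * δ := by linarith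
  have ht0 : 0 < t := by positivity
  have htδ : 1 - δ ≤ t := by
    rw [ht, le_div_iff₀ hpos]
    nlinarith
  have hL3 : ∀ x y, |t * g x - t * g y| ≤ 3 * dist x y := by
    intro x y
    rw [← mul_sub, abs_mul, abs_of_pos ht0]
    calc t * |g x - g y| ≤ t * ((3 + 2 * δ) * dist x y) :=
          mul_le_mul_of_nonneg_left (hgL x y) ht0.le
      _ = 3 * dist x y := by rw [ht]; field_simp
  have hgB : ∀ x, |g x| ≤ 5 * N := by
    intro x
    have c1 := hgL x z
    rw [hgz, sub_zero] at c1
    have c3 := hdN x z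
    have c5 := dist_nonneg (x := x) (y := z)
    nlinarith
  have htg : ∀ x, |t * g x| ≤ 3 * N := by
    intro x
    have c1 := hL3 x z
    rw [hgz, mul_zero, sub_zero] at c1
    have c3 := hdN x z
    linarith
  refine ⟨fun x => t * g x, by simp [hgz], ?_, ?_⟩
  · apply LipschitzWith.of_dist_le_mul
    intro x y
    rw [Real.dist_eq]
    exact hL3 x y
  have hub : ∀ n, ∑' x, μ n x * (t * g x) ≤ 3 * N * (2 * C) := by
    intro n
    have e : ∀ x, μ n x * (t * g x) = ν n x * (t * g x) :=
      hpair n (fun x => t * g x) (by simp [hgz])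
    have hs := hsum' n (fun x => t * g x) _ htg
    refine hs.tsum_le_of_sum_le fun T => ?_
    calc ∑ x ∈ T, μ n x * (t * g x) ≤ ∑ x ∈ T, 3 * N * |ν n x| := by
          refine Finset.sum_le_sum fun x _ => ?_
          rw [e]
          calc ν n x * (t * g x) ≤ |ν n x * (t * g x)| := le_abs_self _
            _ = |t * g x| * |ν n x| := by rw [abs_mul, mul_comm]
            _ ≤ _ := mul_le_mul_of_nonneg_right (htg x) (abs_nonneg _)
      _ = 3 * N * ∑ x ∈ T, |ν n x| := by rw [Finset.mul_sum]
      _ ≤ _ := mul_le_mul_of_nonneg_left (hνC n T) (by positivity)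
  refine lt_of_lt_of_le hδc (le_limsup_of_frequently_le ?_
    (isBoundedUnder_of ⟨_, hub⟩))
  rw [frequently_atTop]
  intro m
  obtain ⟨n, hnm, hn⟩ := hg m
  refine ⟨φ n, hnm.trans hφ.le_apply, ?_⟩
  have hs1 := hsum' (φ n) g _ hgB
  have hs2 := hsum' (φ n) (f n) _ (hlipN _ (hfz n) (hfL n))
  have hdiff : ∑' x, μ (φ n) x * f n x - ∑' x, μ (φ n) x * g x ≤ δ * R := by
    rw [← hs2.tsum_sub hs1]
    refine (hs2.sub hs1).tsum_le_of_sum_le fun T => ?_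
    refine le_trans (Finset.sum_le_sum fun x _ => ?_) (hn T)
    rw [hpair _ _ (hfz n), hpair _ _ hgz, ← mul_sub, ← abs_mul, abs_mul, abs_sub_comm, ← abs_mul]
    exact le_abs_self _
  have e : ∑' x, μ (φ n) x * (t * g x) = t * ∑' x, μ (φ n) x * g x := by
    rw [← tsum_mul_left]
    exact tsum_congr fun x => by ring
  change _ ≤ ∑' x, μ (φ n) x * (t * g x)
  rw [e]
  have hp := hfc n
  have hq : c' - δ * R ≤ ∑' x, μ (φ n) x * g x := by linarith
  have hpos' : 0 ≤ c' - δ * R := by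
    by_contra hneg
    push Not at hneg
    nlinarith
  exact mul_le_mul htδ hq hpos' ht0.le
end
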